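/- arXiv:1503.05175 — 6 statements merged into one kernel-verified Lean document; each statement's English description precedes it below -/
import Mathlib

section
/- Let T be a c.e.m.p.t. on a σ-finite measure space (X,𝒜,μ) with μ(X)=∞. Then for every η>0 the family of return-time distributions {law_{μ_E}[φ_E] : E∈𝒜, μ(E)≥η} is not tight; more precisely, for every η>0 there exist sets E_k∈𝒜 (k≥1) with μ(E_k)=η such that φ_{E_k}(x)≥k for every x∈E_k. -/
/-!
Fix a measurable `A` with `0 < μ A < ∞` and let `h x` be the first `n ≥ 0` with `T^[n] x ∈ A`; by
conservativity and ergodicity `h` is finite almost everywhere (`ae_exists_iterate_mem`). The set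
`E = {x | h x ∈ {k, 2k, 3k, …}}` has all return times at least `k`, since `h` drops by one along
the orbit until `A` is reached. Up to a null set, the space is covered by the sets `T^{-i} A` and
`T^{-i} E` with `i < k`, so invariance of the measure and `μ X = ∞` force `μ E = ∞`
(`exists_long_return`). Passing to a subset can only increase return times, so it remains to find
a subset of `E` of measure exactly `η`.

The measure has no atoms: for `0 < μ A < ∞`, the points of `A` whose return time exceeds `n` have
positive measure, because otherwise finitely many preimages of `A` would form a `T`-invariant set
of finite positive measure; and by Poincaré recurrence this measure tends to zero
(`exists_small_subset`). Exhausting `E` almost optimally by sets of measure at most `η` then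
produces a set of measure exactly `η` (`exists_subset_measure_eq`).

Non-tightness follows, since the return-time law of `E_k` gives mass one to `[k, ∞]`.
-/


open MeasureTheory Filter Set Topology ENNReal

noncomputable section

/-- First entrance/return time of `E` under `T`, valued in `ℝ≥0∞` (`∞` if the
forward orbit never enters `E`). -/
def phiRT {X : Type*} (T : X → X) (E : Set X) (x : X) : ℝ≥0∞ :=
  ⨅ n ∈ {n : ℕ | 0 < n ∧ T^[n] x ∈ E}, (n : ℝ≥0∞)

/-- Conditional (sub)probability `μ_E(A) = μ(E∩A)/μ(E)`, as a real number. -/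
def condProb {X : Type*} [MeasurableSpace X] (μ : Measure X) (E A : Set X) : ℝ :=
  (μ (E ∩ A) / μ E).toReal

/-- Conservative ergodic measure preserving transformation. -/
def CEMPT {X : Type*} [MeasurableSpace X] (T : X → X) (μ : Measure X) : Prop :=
  Conservative T μ ∧ Ergodic T μ

/-- Membership in the class ℱ of sub-probability distribution functions on `[0,∞)`. -/
def MemF (F : ℝ → ℝ) : Prop :=
  (∀ ⦃s t : ℝ⦄, 0 ≤ s → s ≤ t → F s ≤ F t) ∧
  (∀ t, 0 ≤ t → F t ∈ Set.Icc (0 : ℝ) 1) ∧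
  (∀ t, 0 ≤ t → ContinuousWithinAt F (Set.Ici t) t)

/-- Vague convergence `Fₙ ⇒ F` of sub-distribution functions on `[0,∞)`:
convergence at every continuity point of `F` in `[0,∞)`. -/
def VagueConv (Fn : ℕ → ℝ → ℝ) (F : ℝ → ℝ) : Prop :=
  ∀ t, 0 ≤ t → ContinuousWithinAt F (Set.Ici 0) t →
    Tendsto (fun n => Fn n t) atTop (𝓝 (F t))

/-- A scaling function: a homeomorphism of `[0,∞)`. -/
def IsScalingFunction (γ : ℝ → ℝ) : Prop :=
  γ 0 = 0 ∧ StrictMonoOn γ (Set.Ici 0) ∧ ContinuousOn γ (Set.Ici 0) ∧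
  (∀ x, 0 ≤ x → 0 ≤ γ x) ∧ (∀ y, 0 ≤ y → ∃ x, 0 ≤ x ∧ γ x = y)

/-- Regular variation of index `α` at infinity. -/
def RegVary (a : ℝ → ℝ) (α : ℝ) : Prop :=
  ∀ c : ℝ, 0 < c → Tendsto (fun t => a (c * t) / a t) atTop (𝓝 (c ^ α))

/-- The transfer operator iterate `T̂^k 1_Y` (unnormalized): the Radon–Nikodym
derivative w.r.t. `μ` of the pushforward under `T^k` of `μ` restricted to `Y`. -/
def dkDens {X : Type*} [MeasurableSpace X] (T : X → X) (μ : Measure X) (Y : Set X)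
    (k : ℕ) : X → ℝ≥0∞ :=
  (Measure.map (T^[k]) (μ.restrict Y)).rnDeriv μ

/-- `Y` is a Darling–Kac set with return sequence `n ↦ a n`:
`(1/aₙ) Σ_{k<n} T̂^k (1_Y/μ(Y)) → 1` uniformly (mod μ) on `Y`. -/
def IsDKSet {X : Type*} [MeasurableSpace X] (T : X → X) (μ : Measure X) (Y : Set X)
    (a : ℝ → ℝ) : Prop :=
  MeasurableSet Y ∧ 0 < μ Y ∧ μ Y < ∞ ∧
  ∀ ε : ℝ, 0 < ε → ∃ N : ℕ, ∀ n ≥ N,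
    ∀ᵐ x ∂μ.restrict Y,
      |(∑ k ∈ Finset.range n, (dkDens T μ Y k x).toReal) / (μ Y).toReal / a n - 1| ≤ ε

/-- Normalized return/hitting distribution function: the distribution, under `μ_A`,
of `γ(μ(E))·φ_E` evaluated at `t`. -/
def nrmDF {X : Type*} [MeasurableSpace X] (μ : Measure X) (T : X → X) (γ : ℝ → ℝ)
    (A E : Set X) (t : ℝ) : ℝ :=
  condProb μ A {x | ENNReal.ofReal (γ (μ E).toReal) * phiRT T E x ≤ ENNReal.ofReal t}

/-- Sierpiński's intermediate value property: if every set of positive measure contains sets of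
arbitrarily small positive measure, then every set of measure at least `c` contains a set of
measure exactly `c`. -/
lemma exists_subset_measure_eq {X : Type*} [MeasurableSpace X] (μ : Measure X)
    (hsmall : ∀ A, MeasurableSet A → 0 < μ A → ∀ δ : ℝ≥0∞, 0 < δ →
      ∃ B, MeasurableSet B ∧ B ⊆ A ∧ 0 < μ B ∧ μ B ≤ δ)
    (E : Set X) (hE : MeasurableSet E) (c : ℝ≥0∞) (hc : c ≠ ∞) (hcE : c ≤ μ E) :
    ∃ F, MeasurableSet F ∧ F ⊆ E ∧ μ F = c := by
  let P : Set X → Prop := fun F => MeasurableSet F ∧ F ⊆ E ∧ μ F ≤ c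
  -- Each admissible set extends to one of nearly maximal measure among admissible extensions.
  have step : ∀ (n : ℕ) (F : {F // P F}), ∃ F' : {F // P F}, F.1 ⊆ F'.1 ∧
      ∀ G, P G → F.1 ⊆ G → μ G ≤ μ F'.1 + ((n : ℝ≥0∞) + 1)⁻¹ := by
    rintro n ⟨F, hF⟩
    let s : ℝ≥0∞ := ⨆ G : {G // P G ∧ F ⊆ G}, μ G.1
    have hs_le : s ≤ c := iSup_le fun G => G.2.1.2.2
    have hs_top : s ≠ ∞ := (hs_le.trans_lt hc.lt_top).ne
    have hε : ((n : ℝ≥0∞) + 1)⁻¹ ≠ 0 := by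
      simp [ENNReal.add_eq_top]
    have : Nonempty {G // P G ∧ F ⊆ G} := ⟨⟨F, hF, Subset.rfl⟩⟩
    obtain ⟨G', hG'⟩ : ∃ G' : {G // P G ∧ F ⊆ G}, s ≤ μ G'.1 + ((n : ℝ≥0∞) + 1)⁻¹ := by
      by_contra! hcon
      have h1 : s + ((n : ℝ≥0∞) + 1)⁻¹ ≤ s := by
        rw [ENNReal.iSup_add]
        exact iSup_le fun G => (hcon G).le
      exact absurd h1 (not_le.2 (ENNReal.lt_add_right hs_top hε))
    exact ⟨⟨G'.1, G'.2.1⟩, G'.2.2, fun G hG hFG =>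
      (le_iSup (fun G : {G // P G ∧ F ⊆ G} => μ G.1) ⟨G, hG, hFG⟩).trans hG'⟩
  choose next hsub hnext using step
  let S : ℕ → {F // P F} := fun n => Nat.rec ⟨∅, by simp [P]⟩ (fun n F => next n F) n
  have hmono : Monotone fun n => (S n).1 := monotone_nat_of_le_succ fun n => hsub n (S n)
  let F : Set X := ⋃ n, (S n).1
  have hFm : MeasurableSet F := MeasurableSet.iUnion fun n => (S n).2.1
  have hFE : F ⊆ E := iUnion_subset fun n => (S n).2.2.1
  have hFc : μ F ≤ c := by
    rw [hmono.measure_iUnion]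
    exact iSup_le fun n => (S n).2.2.2
  refine ⟨F, hFm, hFE, hFc.antisymm ?_⟩
  by_contra! hlt
  have hFtop : μ F ≠ ∞ := (hFc.trans_lt hc.lt_top).ne
  have hpos : 0 < μ (E \ F) := by
    by_contra! h0
    have h1 : μ E ≤ μ F := by
      calc μ E ≤ μ (F ∪ E \ F) := measure_mono (by simp)
        _ ≤ μ F + μ (E \ F) := measure_union_le _ _
        _ ≤ μ F + 0 := by gcongr
        _ = μ F := add_zero _
    exact absurd (hcE.trans h1) (not_le.2 hlt)
  obtain ⟨B, hBm, hBsub, hB0, hBle⟩ := hsmall _ (hE.diff hFm) hpos (c - μ F) (tsub_pos_of_lt hlt)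
  have hdisj : Disjoint F B := disjoint_sdiff_right.mono_right hBsub
  have hμ : μ (F ∪ B) = μ F + μ B := measure_union hdisj hBm
  have hP : P (F ∪ B) := by
    refine ⟨hFm.union hBm, union_subset hFE (hBsub.trans sdiff_subset), ?_⟩
    rw [hμ]
    calc μ F + μ B ≤ μ F + (c - μ F) := by gcongr
      _ = c := add_tsub_cancel_of_le hFc
  -- The extension by `B` is admissible at every stage, so it gains at most `1/(n+1)` for all `n`.
  have hle : ∀ n : ℕ, μ B ≤ ((n : ℝ≥0∞) + 1)⁻¹ := by
    intro n
    have h1 := hnext n (S n) _ hP ((subset_iUnion (fun n => (S n).1) n).trans subset_union_left)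
    have h2 : μ (S (n + 1)).1 ≤ μ F := measure_mono (subset_iUnion (fun n => (S n).1) (n + 1))
    rw [hμ] at h1
    exact (ENNReal.add_le_add_iff_left hFtop).1 (h1.trans (by gcongr))
  obtain ⟨n, hn⟩ := ENNReal.exists_inv_nat_lt hB0.ne'
  have h3 : ((n : ℝ≥0∞) + 1)⁻¹ ≤ (n : ℝ≥0∞)⁻¹ := ENNReal.inv_le_inv.2 le_self_add
  exact absurd ((hle n).trans h3) (not_le.2 hn)

section Dynamics

variable {X : Type*} [MeasurableSpace X] {μ : Measure X} {T : X → X}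

/-- In an infinite-measure system every set of positive measure contains sets of arbitrarily small
positive measure: inside a subset `A` of finite measure, take the points that do not return to `A`
within `n` steps. -/
lemma exists_small_subset [SigmaFinite μ] (hT : CEMPT T μ) (hInf : μ Set.univ = ∞)
    (A₀ : Set X) (hA₀ : MeasurableSet A₀) (hpos₀ : 0 < μ A₀) (δ : ℝ≥0∞) (hδ : 0 < δ) :
    ∃ B, MeasurableSet B ∧ B ⊆ A₀ ∧ 0 < μ B ∧ μ B ≤ δ := by
  obtain ⟨A, hA, hAsub, hpos, hfin⟩ := Measure.exists_subset_measure_lt_top hA₀ hpos₀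
  have hTm : Measurable T := hT.2.measurable
  let D : ℕ → Set X := fun n => A \ ⋃ j ∈ Finset.Icc 1 n, T^[j] ⁻¹' A
  have hDm : ∀ n, MeasurableSet (D n) := fun n =>
    hA.diff (Finset.measurableSet_biUnion _ fun j _ => (hTm.iterate j) hA)
  have hmem : ∀ n x, x ∈ D n ↔ x ∈ A ∧ ∀ j, 1 ≤ j → j ≤ n → T^[j] x ∉ A := by
    intro n x
    simp [D]
  have hanti : Antitone D := by
    intro m n hmn x hx
    rw [hmem] at hx ⊢
    exact ⟨hx.1, fun j h1 h2 => hx.2 j h1 (h2.trans hmn)⟩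
  have hDpos : ∀ n, 0 < μ (D n) := by
    intro n
    by_contra! h0
    have h0 : μ (D n) = 0 := le_antisymm h0 bot_le
    -- If almost every point of `A` returns within `n` steps, this union is forward invariant.
    let U : Set X := ⋃ j ∈ Finset.range (n + 1), T^[j] ⁻¹' A
    have hUmem : ∀ x, x ∈ U ↔ ∃ j, j < n + 1 ∧ T^[j] x ∈ A := by
      intro x
      simp [U]
    have hUm : MeasurableSet U :=
      Finset.measurableSet_biUnion _ fun j _ => (hTm.iterate j) hA
    have hUfin : μ U ≠ ∞ := by
      refine (lt_of_le_of_lt (measure_biUnion_finset_le _ _) ?_).ne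
      refine ENNReal.sum_lt_top.2 fun j _ => ?_
      rw [(hT.2.toMeasurePreserving.iterate j).measure_preimage hA.nullMeasurableSet]
      exact hfin
    have hUle : U ≤ᵐ[μ] T ⁻¹' U := by
      have h0' : ∀ᵐ x ∂μ, x ∉ D n := measure_eq_zero_iff_ae_notMem.1 h0
      filter_upwards [h0'] with x hx hxU
      change T x ∈ U
      obtain ⟨j, hj, hjA⟩ := (hUmem x).1 hxU
      have key : ∀ i, 1 ≤ i → i ≤ n → T^[i] x ∈ A → T x ∈ U := by
        intro i h1 h2 hi
        obtain ⟨i, rfl⟩ := Nat.exists_eq_add_of_le' h1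
        exact (hUmem _).2 ⟨i, by omega, by simpa [Function.iterate_succ_apply] using hi⟩
      rcases Nat.eq_zero_or_pos j with rfl | hj0
      · rw [hmem] at hx
        push Not at hx
        obtain ⟨i, h1, h2, hi⟩ := hx (by simpa using hjA)
        exact key i h1 h2 hi
      · exact key j hj0 (by omega) hjA
    rcases hT.2.ae_empty_or_univ_of_ae_le_preimage' hUm.nullMeasurableSet hUle hUfin with h | h
    · have hAU : A ⊆ U := fun x hx => (hUmem x).2 ⟨0, by omega, by simpa using hx⟩
      have h1 : μ U = 0 := by simpa using measure_congr h
      exact absurd (measure_mono_null hAU h1) hpos.ne'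
    · exact hUfin ((measure_congr h).trans hInf)
  have hlim : Tendsto (fun n => μ (D n)) atTop (𝓝 0) := by
    have h1 := tendsto_measure_iInter_atTop (μ := μ) (fun n => (hDm n).nullMeasurableSet) hanti
      ⟨0, (lt_of_le_of_lt (measure_mono sdiff_subset) hfin).ne⟩
    have h2 : μ (⋂ n, D n) = 0 := by
      refine measure_mono_null ?_
        (hT.1.measure_mem_forall_ge_image_notMem_eq_zero hA.nullMeasurableSet 1)
      intro x hx
      have hx' := fun n => (hmem n x).1 (mem_iInter.1 hx n)
      exact ⟨(hx' 0).1, fun m hm => (hx' m).2 m hm le_rfl⟩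
    rwa [h2] at h1
  obtain ⟨n, hn⟩ := (hlim.eventually (ge_mem_nhds hδ)).exists
  exact ⟨D n, hDm n, sdiff_subset.trans hAsub, hDpos n, hn⟩

lemma ae_exists_iterate_mem (hT : CEMPT T μ) {A : Set X} (hA : MeasurableSet A)
    (hpos : 0 < μ A) : ∀ᵐ x ∂μ, ∃ n, T^[n] x ∈ A := by
  let U : Set X := ⋃ n, T^[n] ⁻¹' A
  have hUmem : ∀ x, x ∈ U ↔ ∃ n, T^[n] x ∈ A := by simp [U]
  have hUm : MeasurableSet U := MeasurableSet.iUnion fun n => (hT.2.measurable.iterate n) hA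
  have hUinv : T ⁻¹' U =ᵐ[μ] U := by
    have hrec := hT.1.measure_mem_forall_ge_image_notMem_eq_zero hA.nullMeasurableSet 1
    refine Filter.eventuallyEq_set.2 ?_
    filter_upwards [measure_eq_zero_iff_ae_notMem.1 hrec] with x hx
    rw [mem_preimage, hUmem, hUmem]
    constructor
    · rintro ⟨n, hn⟩
      exact ⟨n + 1, by simpa [Function.iterate_succ_apply] using hn⟩
    · rintro ⟨n, hn⟩
      have key : ∀ m ≥ 1, T^[m] x ∈ A → ∃ n, T^[n] (T x) ∈ A := by
        intro m hm h
        obtain ⟨m, rfl⟩ := Nat.exists_eq_add_of_le' hm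
        exact ⟨m, by simpa [Function.iterate_succ_apply] using h⟩
      rcases Nat.eq_zero_or_pos n with rfl | h0
      · simp only [not_and, not_forall, not_not] at hx
        obtain ⟨m, hm, h⟩ := hx (by simpa using hn)
        exact key m hm h
      · exact key n h0 hn
  rcases hT.2.quasiErgodic.ae_mem_or_ae_notMem₀ hUm.nullMeasurableSet hUinv with h | h
  · filter_upwards [h] with x hx using (hUmem x).1 hx
  · have h1 : μ U = 0 := measure_eq_zero_iff_ae_notMem.2 h
    have hAU : A ⊆ U := fun x hx => (hUmem x).2 ⟨0, by simpa using hx⟩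
    exact absurd (measure_mono_null hAU h1) hpos.ne'

/-- There are sets of infinite measure with all return times at least `k`: the points whose first
hitting time of a fixed set of finite positive measure is a positive multiple of `k`. -/
lemma exists_long_return [SigmaFinite μ] (hT : CEMPT T μ) (hInf : μ Set.univ = ∞)
    (k : ℕ) (hk : 1 ≤ k) :
    ∃ E, MeasurableSet E ∧ μ E = ∞ ∧ ∀ x ∈ E, ∀ i, 0 < i → i < k → T^[i] x ∉ E := by
  obtain ⟨A, hA, -, hpos, hfin⟩ := Measure.exists_subset_measure_lt_top (μ := μ) (r := 0)
    MeasurableSet.univ (by rw [hInf]; exact ENNReal.zero_lt_top)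
  have hTm : Measurable T := hT.2.measurable
  -- `H n` is the set of points whose first hitting time of `A` is `n`.
  let H : ℕ → Set X := fun n => (T^[n] ⁻¹' A) \ ⋃ m ∈ Finset.range n, T^[m] ⁻¹' A
  have hHmem : ∀ n x, x ∈ H n ↔ T^[n] x ∈ A ∧ ∀ m, m < n → T^[m] x ∉ A := by
    intro n x
    simp [H]
  have hHm : ∀ n, MeasurableSet (H n) := fun n =>
    ((hTm.iterate n) hA).diff (Finset.measurableSet_biUnion _ fun j _ => (hTm.iterate j) hA)
  have hHuniq : ∀ m n x, x ∈ H m → x ∈ H n → m = n := by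
    intro m n x hm hn
    rw [hHmem] at hm hn
    rcases lt_trichotomy m n with h | h | h
    · exact absurd hm.1 (hn.2 m h)
    · exact h
    · exact absurd hn.1 (hm.2 n h)
  have hHshift : ∀ i n x, x ∈ H (n + i) → T^[i] x ∈ H n := by
    intro i n x hx
    rw [hHmem] at hx ⊢
    simp only [← Function.iterate_add_apply]
    exact ⟨hx.1, fun m hm => hx.2 (m + i) (by omega)⟩
  let E : Set X := ⋃ j, H ((j + 1) * k)
  have hEmem : ∀ x, x ∈ E ↔ ∃ j, x ∈ H ((j + 1) * k) := by simp [E]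
  have hEm : MeasurableSet E := MeasurableSet.iUnion fun j => hHm _
  refine ⟨E, hEm, ?_, ?_⟩
  · -- Almost every point is in `T^{-i} A` or `T^{-i} E` for some `i < k`.
    have hcov : ∀ᵐ x ∂μ, x ∈ ⋃ i ∈ Finset.range k, T^[i] ⁻¹' (A ∪ E) := by
      filter_upwards [ae_exists_iterate_mem hT hA hpos] with x hx
      classical
      have hn : x ∈ H (Nat.find hx) :=
        (hHmem _ _).2 ⟨Nat.find_spec hx, fun m hm => Nat.find_min hx hm⟩
      generalize Nat.find hx = n at hn
      simp only [mem_iUnion, Finset.mem_range, mem_preimage, exists_prop]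
      refine ⟨n % k, Nat.mod_lt _ hk, ?_⟩
      have hdiv : n = (n / k) * k + n % k := (Nat.div_add_mod' n k).symm
      rw [hdiv] at hn
      have hshift := hHshift _ _ _ hn
      rcases Nat.eq_zero_or_pos (n / k) with h0 | h0
      · left
        rw [h0, zero_mul, hHmem] at hshift
        simpa using hshift.1
      · right
        obtain ⟨j, hj⟩ := Nat.exists_eq_add_of_le' h0
        rw [hj] at hshift
        exact (hEmem _).2 ⟨j, hshift⟩
    by_contra hE
    have hAE : μ (A ∪ E) < ∞ := measure_union_lt_top hfin (lt_top_iff_ne_top.2 hE)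
    have hlt : μ (⋃ i ∈ Finset.range k, T^[i] ⁻¹' (A ∪ E)) < ∞ := by
      refine lt_of_le_of_lt (measure_biUnion_finset_le _ _) ?_
      refine ENNReal.sum_lt_top.2 fun j _ => ?_
      rw [(hT.2.toMeasurePreserving.iterate j).measure_preimage (hA.union hEm).nullMeasurableSet]
      exact hAE
    have huniv : μ (⋃ i ∈ Finset.range k, T^[i] ⁻¹' (A ∪ E)) = μ univ :=
      measure_congr (eventuallyEq_univ.2 hcov)
    rw [huniv, hInf] at hlt
    exact absurd hlt (lt_irrefl _)
  · intro x hx i hi0 hik hiE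
    obtain ⟨j, hj⟩ := (hEmem x).1 hx
    obtain ⟨l, hl⟩ := (hEmem _).1 hiE
    have hge : i ≤ (j + 1) * k := hik.le.trans (Nat.le_mul_of_pos_left k (Nat.succ_pos j))
    have h1 : T^[i] x ∈ H ((j + 1) * k - i) := hHshift i _ x (by rwa [Nat.sub_add_cancel hge])
    have h2 := hHuniq _ _ _ h1 hl
    have h3 : (j + 1) * k = (l + 1) * k + i := by omega
    have h4 : k ∣ i := (Nat.dvd_add_right (Dvd.intro_left (l + 1) rfl)).1
      (h3 ▸ Dvd.intro_left (j + 1) rfl)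
    exact absurd (Nat.le_of_dvd hi0 h4) (not_le.2 hik)

end Dynamics

/-- In an infinite-measure c.e.m.p.t. system, for every η>0 the family
of return-time distributions of sets of measure ≥ η is not tight; more precisely there
are sets `E k` of measure η with `φ_{E k} ≥ k` everywhere on `E k`. -/
theorem stmt0 {X : Type*} [MeasurableSpace X] (μ : Measure X) [SigmaFinite μ]
    (T : X → X) (hT : CEMPT T μ) (hInf : μ Set.univ = ∞)
    (η : ℝ) (hη : 0 < η) :
    (¬ ∀ ε : ℝ, 0 < ε → ∃ t : ℝ, ∀ E : Set X, MeasurableSet E →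
        ENNReal.ofReal η ≤ μ E →
        condProb μ E {x | ENNReal.ofReal t < phiRT T E x} ≤ ε) ∧
    ∃ E : ℕ → Set X, ∀ k : ℕ, 1 ≤ k → MeasurableSet (E k) ∧
      μ (E k) = ENNReal.ofReal η ∧
      ∀ x ∈ E k, (k : ℝ≥0∞) ≤ phiRT T (E k) x := by
  have hset : ∀ k : ℕ, ∃ E : Set X, 1 ≤ k → MeasurableSet E ∧ μ E = ENNReal.ofReal η ∧
      ∀ x ∈ E, (k : ℝ≥0∞) ≤ phiRT T E x := by
    intro k
    by_cases hk : 1 ≤ k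
    swap
    · exact ⟨∅, fun h => absurd h hk⟩
    obtain ⟨E, hEm, hEtop, hEret⟩ := exists_long_return hT hInf k hk
    obtain ⟨F, hFm, hFE, hF⟩ := exists_subset_measure_eq μ (exists_small_subset hT hInf) E hEm
      (ENNReal.ofReal η) ENNReal.ofReal_ne_top (by rw [hEtop]; exact le_top)
    refine ⟨F, fun _ => ⟨hFm, hF, fun x hx => le_iInf₂ fun n hn => ?_⟩⟩
    by_contra! hlt
    exact hEret x (hFE hx) n hn.1 (by exact_mod_cast hlt) (hFE hn.2)
  choose E hE using hset
  refine ⟨fun htight => ?_, E, hE⟩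
  obtain ⟨t, ht⟩ := htight (1 / 2) (by norm_num)
  obtain ⟨k, hk⟩ := exists_nat_gt (max t 1)
  have hkt : t < k := (le_max_left _ _).trans_lt hk
  have hk1 : (1 : ℝ) < k := (le_max_right _ _).trans_lt hk
  obtain ⟨hm, hμ, hφ⟩ := hE k (by exact_mod_cast hk1.le)
  have h := ht (E k) hm hμ.ge
  have hlt : ENNReal.ofReal t < (k : ℝ≥0∞) := by
    rw [← ENNReal.ofReal_natCast, ENNReal.ofReal_lt_ofReal_iff (by linarith)]
    exact hkt
  have hinter : E k ∩ {x | ENNReal.ofReal t < phiRT T (E k) x} = E k :=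
    inter_eq_left.2 fun x hx => hlt.trans_le (hφ x hx)
  have hone : ENNReal.ofReal η / ENNReal.ofReal η = 1 :=
    ENNReal.div_self (ENNReal.ofReal_pos.2 hη).ne' ENNReal.ofReal_ne_top
  rw [condProb, hinter, hμ, hone, ENNReal.toReal_one] at h
  norm_num at h
end
end

section
/- Let T be a c.e.m.p.t. on a σ-finite measure space (X,𝒜,μ) with μ(X)=∞, and let Y∈𝒜 satisfy 0<μ(Y)<∞. Then for every η>0 the family of return-time distributions {law_{μ_E}[φ_E] : E∈Y∩𝒜, μ(E)≥η} is tight: for every ε>0 there is an integer N≥1 such that μ_E(φ_E>N)<ε for every measurable E⊆Y with μ(E)≥η. -/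
/-!
The number of returns to `Y` controls everything. Fix `N`, and let `A` be the set of those `x ∈ E`
whose orbit avoids `E` at the times `1, …, N`. For `1 ≤ n ≤ N`, the sets
`T^{-(N-n)}(A ∩ T^{-n} Y)` all lie in `T^{-N} Y`, and they are pairwise disjoint since an orbit
visits `A` at most once in a time window of length `N`. As `T` preserves `μ`,
`∫_A #{1 ≤ n ≤ N : T^n x ∈ Y} dμ = ∑_n μ(A ∩ T^{-n} Y) ≤ μ(Y)` (`lintegral_visits_le`).
Thus the points of `A` with at least `K` visits to `Y` before time `N` have measure at most
`μ(Y) / K`. By conservativity almost every point of `Y` returns to `Y` infinitely often, so for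
fixed `K` the points of `Y` with fewer than `K` visits up to time `N` have measure tending to `0`
as `N → ∞` (`tendsto_measure_few_visits`). Both bounds are independent of `E`; choosing
first `K` and then `N` makes their sum smaller than `ε η ≤ ε μ(E)`.
-/

open MeasureTheory Filter Set Topology ENNReal

noncomputable section

/-- The number of visits of the orbit of `x` to `Y` at the times `1, …, N`. -/
def visits {X : Type*} (T : X → X) (Y : Set X) (N : ℕ) (x : X) : ℝ≥0∞ :=
  ∑ n ∈ Finset.range N, (T^[n + 1] ⁻¹' Y).indicator 1 x

/-- The points of `E` whose orbit avoids `E` at the times `1, …, N`. -/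
def lateReturn {X : Type*} (T : X → X) (E : Set X) (N : ℕ) : Set X :=
  E ∩ ⋂ n ∈ Finset.range N, (T^[n + 1] ⁻¹' E)ᶜ

lemma visits_mono {X : Type*} (T : X → X) (Y : Set X) (x : X) :
    Monotone fun N => visits T Y N x := by
  intro M N h
  exact Finset.sum_le_sum_of_subset (Finset.range_mono h)

lemma measurable_visits {X : Type*} [MeasurableSpace X] {T : X → X} (hT : Measurable T)
    {Y : Set X} (hY : MeasurableSet Y) (N : ℕ) : Measurable (visits T Y N) := by
  unfold visits
  exact Finset.measurable_fun_sum _ fun n _ =>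
    measurable_one.indicator ((hT.iterate (n + 1)) hY)

lemma exists_le_visits {X : Type*} (T : X → X) (Y : Set X) (x : X)
    (h : ∃ᶠ n in atTop, T^[n] x ∈ Y) (K : ℕ) : ∃ N, (K : ℝ≥0∞) ≤ visits T Y N x := by
  induction K with
  | zero => exact ⟨0, by simp⟩
  | succ K ih =>
    obtain ⟨N, hN⟩ := ih
    obtain ⟨m, hm, hmY⟩ := (frequently_atTop.1 h) (N + 1)
    obtain ⟨k, rfl⟩ : ∃ k, m = k + 1 := ⟨m - 1, by omega⟩
    refine ⟨k + 1, ?_⟩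
    have h1 : visits T Y (k + 1) x = visits T Y k x + 1 := by
      unfold visits
      rw [Finset.sum_range_succ, indicator_of_mem (by exact hmY)]
      rfl
    rw [h1]
    push_cast
    gcongr
    exact hN.trans (visits_mono T Y x (by omega))

/-- Under a conservative map, the points of `Y` with fewer than `K` visits to `Y` up to time `N`
become negligible as `N → ∞`. -/
lemma tendsto_measure_few_visits {X : Type*} [MeasurableSpace X] {μ : Measure X} {T : X → X}
    (hT : Conservative T μ) (hTm : Measurable T) {Y : Set X} (hY : MeasurableSet Y)
    (hY1 : μ Y < ∞) (K : ℕ) :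
    Tendsto (fun N => μ (Y ∩ {x | visits T Y N x < K})) atTop (𝓝 0) := by
  have h0 : μ (⋂ N, Y ∩ {x | visits T Y N x < K}) = 0 := by
    rw [measure_eq_zero_iff_ae_notMem]
    filter_upwards [hT.ae_mem_imp_frequently_image_mem hY.nullMeasurableSet] with x hx hmem
    rw [mem_iInter] at hmem
    obtain ⟨N, hN⟩ := exists_le_visits T Y x (hx (hmem 0).1) K
    exact absurd (hmem N).2 (not_lt.2 hN)
  rw [← h0]
  refine tendsto_measure_iInter_atTop (fun N => ?_) ?_ ⟨0, ?_⟩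
  · exact (hY.inter (measurableSet_lt (measurable_visits hTm hY N)
      measurable_const)).nullMeasurableSet
  · intro M N h x hx
    exact ⟨hx.1, (visits_mono T Y x h).trans_lt hx.2⟩
  · exact ((measure_mono inter_subset_left).trans_lt hY1).ne

lemma measurableSet_lateReturn {X : Type*} [MeasurableSpace X] {T : X → X} (hT : Measurable T)
    {E : Set X} (hE : MeasurableSet E) (N : ℕ) : MeasurableSet (lateReturn T E N) :=
  hE.inter (Finset.measurableSet_biInter _ fun n _ => ((hT.iterate (n + 1)) hE).compl)

/-- A Kac-type inequality: the number of visits to `Y` up to time `N`, integrated over the points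
of `E` that do not return to `E` up to time `N`, is at most `μ Y`. -/
lemma lintegral_visits_le {X : Type*} [MeasurableSpace X] {μ : Measure X} {T : X → X}
    (hT : MeasurePreserving T μ μ) {Y E : Set X} (hY : MeasurableSet Y) (hE : MeasurableSet E)
    (N : ℕ) : ∫⁻ x in lateReturn T E N, visits T Y N x ∂μ ≤ μ Y := by
  set A := lateReturn T E N with hA
  have hAm : MeasurableSet A := measurableSet_lateReturn hT.measurable hE N
  have hYm : ∀ n, MeasurableSet (T^[n] ⁻¹' Y) := fun n => (hT.measurable.iterate n) hY
  have h1 : ∫⁻ x in A, visits T Y N x ∂μ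
      = ∑ n ∈ Finset.range N, μ (T^[N - (n + 1)] ⁻¹' (A ∩ T^[n + 1] ⁻¹' Y)) := by
    unfold visits
    rw [lintegral_finsetSum _ fun n _ => measurable_one.indicator (hYm _)]
    refine Finset.sum_congr rfl fun n _ => ?_
    rw [lintegral_indicator_one (hYm _), Measure.restrict_apply (hYm _), inter_comm,
      (hT.iterate _).measure_preimage (hAm.inter (hYm _)).nullMeasurableSet]
  rw [h1, ← measure_biUnion_finset]
  · rw [← (hT.iterate N).measure_preimage hY.nullMeasurableSet]
    refine measure_mono (iUnion₂_subset fun n hn x hx => ?_)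
    have h2 : T^[n + 1] (T^[N - (n + 1)] x) ∈ Y := hx.2
    rw [← Function.iterate_add_apply, Nat.add_sub_cancel' (Finset.mem_range.1 hn)] at h2
    exact h2
  · -- An orbit in `A` at time `N - (n + 1)` cannot be in `E` at the later time `N - (m + 1)`.
    have key : ∀ m n, m < n → n < N → ∀ x, T^[N - (n + 1)] x ∈ A →
        T^[N - (m + 1)] x ∈ A → False := by
      intro m n hmn hn x hxn hxm
      have h2 := mem_iInter₂.1 hxn.2 (n - m - 1) (Finset.mem_range.2 (by omega))
      apply h2
      change T^[n - m - 1 + 1] (T^[N - (n + 1)] x) ∈ E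
      rw [← Function.iterate_add_apply,
        show n - m - 1 + 1 + (N - (n + 1)) = N - (m + 1) by omega]
      exact hxm.1
    intro m hm n hn hmn
    rw [Finset.mem_coe, Finset.mem_range] at hm hn
    refine disjoint_left.2 fun x hxm hxn => ?_
    rcases lt_or_gt_of_ne hmn with h | h
    · exact key m n h hn x hxn.1 hxm.1
    · exact key n m h hm x hxm.1 hxn.1
  · exact fun n _ => (hT.measurable.iterate _) (hAm.inter (hYm _))

lemma inter_lt_phiRT_subset {X : Type*} (T : X → X) (E : Set X) (N : ℕ) :
    E ∩ {x | (N : ℝ≥0∞) < phiRT T E x} ⊆ lateReturn T E N := by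
  rintro x ⟨hxE, hx⟩
  refine ⟨hxE, mem_iInter₂.2 fun n hn hmem => ?_⟩
  have h1 : phiRT T E x ≤ ((n + 1 : ℕ) : ℝ≥0∞) := iInf₂_le (n + 1) ⟨n.succ_pos, hmem⟩
  have h2 : ((n + 1 : ℕ) : ℝ≥0∞) ≤ N := by exact_mod_cast Finset.mem_range.1 hn
  exact absurd hx (not_lt.2 (h1.trans h2))

/-- Locally (inside a fixed set `Y` of positive finite measure), the
family of return-time distributions of subsets of measure ≥ η is tight. -/
theorem stmt1 {X : Type*} [MeasurableSpace X] (μ : Measure X) [SigmaFinite μ]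
    (T : X → X) (hT : CEMPT T μ) (hInf : μ Set.univ = ∞)
    (Y : Set X) (hY : MeasurableSet Y) (hY0 : 0 < μ Y) (hY1 : μ Y < ∞)
    (η : ℝ) (hη : 0 < η) (ε : ℝ) (hε : 0 < ε) :
    ∃ N : ℕ, 1 ≤ N ∧ ∀ E : Set X, E ⊆ Y → MeasurableSet E →
      ENNReal.ofReal η ≤ μ E →
      condProb μ E {x | (N : ℝ≥0∞) < phiRT T E x} < ε := by
  obtain ⟨hC, hErg⟩ := hT
  have hMP : MeasurePreserving T μ μ := hErg.toMeasurePreserving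
  set δ : ℝ≥0∞ := ENNReal.ofReal (ε * η / 2) with hδ
  have hδ0 : δ ≠ 0 := by
    rw [hδ, Ne, ENNReal.ofReal_eq_zero, not_le]
    positivity
  obtain ⟨K, -, hK⟩ := ENNReal.exists_nat_pos_mul_gt hδ0 hY1.ne
  obtain ⟨N, hN, hN1⟩ := (((tendsto_measure_few_visits hC hMP.measurable hY hY1 K).eventually
    (gt_mem_nhds (pos_iff_ne_zero.2 hδ0))).and (eventually_ge_atTop 1)).exists
  refine ⟨N, hN1, fun E hEY hE hηE => ?_⟩
  set A := lateReturn T E N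
  have hB : MeasurableSet {x | (K : ℝ≥0∞) ≤ visits T Y N x} :=
    measurableSet_le measurable_const (measurable_visits hMP.measurable hY N)
  have hAK : μ (A ∩ {x | (K : ℝ≥0∞) ≤ visits T Y N x}) < δ := by
    have hmarkov : (K : ℝ≥0∞) * μ (A ∩ {x | (K : ℝ≥0∞) ≤ visits T Y N x}) ≤ μ Y := by
      rw [inter_comm, ← Measure.restrict_apply hB]
      exact (mul_meas_ge_le_lintegral (measurable_visits hMP.measurable hY N) _).trans
        (lintegral_visits_le hMP hY hE N)
    exact lt_of_mul_lt_mul_left' (hmarkov.trans_lt hK)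
  have hsub : E ∩ {x | (N : ℝ≥0∞) < phiRT T E x} ⊆
      (A ∩ {x | (K : ℝ≥0∞) ≤ visits T Y N x}) ∪ (Y ∩ {x | visits T Y N x < K}) := by
    intro x hx
    rcases le_or_gt (K : ℝ≥0∞) (visits T Y N x) with h | h
    · exact Or.inl ⟨inter_lt_phiRT_subset T E N hx, h⟩
    · exact Or.inr ⟨hEY hx.1, h⟩
  have hE0 : μ E ≠ 0 := ((ENNReal.ofReal_pos.2 hη).trans_le hηE).ne'
  have hE1 : μ E ≠ ∞ := ((measure_mono hEY).trans_lt hY1).ne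
  have hmain : μ (E ∩ {x | (N : ℝ≥0∞) < phiRT T E x}) < ENNReal.ofReal ε * μ E :=
    calc μ (E ∩ {x | (N : ℝ≥0∞) < phiRT T E x})
        ≤ _ := (measure_mono hsub).trans (measure_union_le _ _)
      _ < δ + δ := ENNReal.add_lt_add hAK hN
      _ = ENNReal.ofReal ε * ENNReal.ofReal η := by
        rw [hδ, ← ENNReal.ofReal_add (by positivity) (by positivity), add_halves,
          ENNReal.ofReal_mul hε.le]
      _ ≤ ENNReal.ofReal ε * μ E := by gcongr
  have hdiv : μ (E ∩ {x | (N : ℝ≥0∞) < phiRT T E x}) / μ E < ENNReal.ofReal ε :=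
    (ENNReal.div_lt_iff (Or.inl hE0) (Or.inl hE1)).2 hmain
  exact (ENNReal.lt_ofReal_iff_toReal_lt (ne_top_of_lt hdiv)).1 hdiv
end
end

section
/- Let T be a c.e.m.p.t. on a σ-finite measure space (X,𝒜,μ) with μ(X)=∞, and let Y∈𝒜 with 0<μ(Y)<∞. Then there exist measurable sets E_k⊆Y (k≥1) with 0<μ(E_k)<1/k and μ_{E_k}( μ(E_k)·φ_{E_k} > k ) > (k−1)/k. In particular, the family {law_{μ_E}[μ(E)·φ_E] : E∈Y∩𝒜, μ(E)>0} is not tight. -/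
/-!
For a set `B` of positive measure and a window length `N`, a greedy selection extracts from `B` a
set `E` whose return time exceeds `N` everywhere on `E`, while almost every visit to `B` is followed
within `N` steps by a visit to `E` or to a prescribed auxiliary set `F` (`greedy`, `coverage`).
Consequently `⋃_{i<N} T⁻ⁱ B ⊆ ⋃_{l<2N} T⁻ˡ E ∪ ⋃_{l<2N} T⁻ˡ F` modulo null sets, so that
`μ (⋃_{i<N} T⁻ⁱ B) ≤ 2N μ(E) + 2N μ(F)`.

By conservativity and ergodicity `⋃_i T⁻ⁱ B` has full, hence infinite, measure. Thus `N` can be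
chosen so that the left-hand side exceeds `2k + 1`, and afterwards `F` with `2N μ(F) ≤ 1`. This
gives `N μ(E) > k`, hence `μ(E) φ_E > k` at every point of `E`. Starting with `B ⊆ Y` of
measure `< 1/k` makes `μ(E)` small.

Arbitrarily small subsets of positive measure (`exists_small_subset`) are supplied by the
points of `Y` with long return time: these sets decrease to a null set by recurrence, and none of
them is null, since otherwise finitely many preimages of `Y` would form an invariant set of
finite positive measure.
-/

open MeasureTheory Filter Set Topology ENNReal

noncomputable section

/-- Almost every orbit of a c.e.m.p.t. visits a given set of positive measure infinitely often. -/
lemma ae_frequently_mem {X : Type*} [MeasurableSpace X] {μ : Measure X} {T : X → X}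
    (hT : CEMPT T μ) {B : Set X} (hB : MeasurableSet B) (hB0 : 0 < μ B) :
    ∀ᵐ x ∂μ, ∃ᶠ n in atTop, T^[n] x ∈ B := by
  have hTm : Measurable T := hT.2.measurable
  have hmeas : MeasurableSet {x | ∃ᶠ n in atTop, T^[n] x ∈ B} := by
    have h : {x | ∃ᶠ n in atTop, T^[n] x ∈ B} = ⋂ a : ℕ, ⋃ b : ℕ, ⋃ _ : a ≤ b, T^[b] ⁻¹' B := by
      ext x
      simp [frequently_atTop]
    rw [h]
    exact .iInter fun a => .iUnion fun b => .iUnion fun _ => (hTm.iterate b) hB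
  have hinv : T ⁻¹' {x | ∃ᶠ n in atTop, T^[n] x ∈ B} = {x | ∃ᶠ n in atTop, T^[n] x ∈ B} := by
    ext x
    change (∃ᶠ n in atTop, T^[n] (T x) ∈ B) ↔ ∃ᶠ n in atTop, T^[n] x ∈ B
    conv_rhs => rw [← map_add_atTop_eq_nat 1, frequently_map]
    simp [Function.iterate_succ_apply]
  rcases hT.2.toPreErgodic.ae_mem_or_ae_notMem hmeas hinv with h | h
  · exact h
  · exfalso
    have h1 := hT.1.ae_mem_imp_frequently_image_mem hB.nullMeasurableSet
    refine hB0.ne' (measure_eq_zero_iff_ae_notMem.2 ?_)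
    filter_upwards [h, h1] with x hx hx1 hxB
    exact hx (hx1 hxB)

/-- Points of `Y` whose first return takes more than `n` steps form a non-null set. -/
lemma long_return_pos {X : Type*} [MeasurableSpace X] {μ : Measure X} {T : X → X}
    (hT : CEMPT T μ) (hInf : μ Set.univ = ∞) {Y : Set X} (hY : MeasurableSet Y)
    (hY0 : 0 < μ Y) (hY1 : μ Y < ∞) (n : ℕ) :
    0 < μ (Y ∩ {x | ∀ j, 0 < j → j ≤ n → T^[j] x ∉ Y}) := by
  rw [pos_iff_ne_zero]
  intro h0
  have hTm : Measurable T := hT.2.measurable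
  set Z : Set X := ⋃ j ∈ Finset.range (n + 1), T^[j] ⁻¹' Y with hZ
  have memZ : ∀ x, x ∈ Z ↔ ∃ j ≤ n, T^[j] x ∈ Y := by
    intro x
    simp [hZ]
  have hZm : MeasurableSet Z := Finset.measurableSet_biUnion _ fun j _ => (hTm.iterate j) hY
  have hZfin : μ Z < ∞ := by
    refine (measure_biUnion_finset_le _ _).trans_lt (ENNReal.sum_lt_top.2 fun j _ => ?_)
    rwa [(hT.2.toMeasurePreserving.iterate j).measure_preimage hY.nullMeasurableSet]
  have hsub : Z ≤ᵐ[μ] T ⁻¹' Z := by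
    filter_upwards [measure_eq_zero_iff_ae_notMem.1 h0] with x hx hxZ
    change T x ∈ Z
    have hxZ' : x ∈ Z := hxZ
    rw [memZ] at hxZ' ⊢
    have key : ∃ j, 0 < j ∧ j ≤ n ∧ T^[j] x ∈ Y := by
      obtain ⟨j, hj, hjY⟩ := hxZ'
      rcases Nat.eq_zero_or_pos j with rfl | hj0
      · by_contra hcon
        push Not at hcon
        exact hx ⟨hjY, fun j h1 h2 => hcon j h1 h2⟩
      · exact ⟨j, hj0, hj, hjY⟩
    obtain ⟨j, hj0, hj, hjY⟩ := key
    obtain ⟨i, rfl⟩ := Nat.exists_eq_succ_of_ne_zero hj0.ne'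
    exact ⟨i, by omega, by rwa [Nat.succ_eq_add_one, Function.iterate_succ_apply] at hjY⟩
  rcases hT.2.ae_empty_or_univ_of_ae_le_preimage' hZm.nullMeasurableSet hsub hZfin.ne with h | h
  · have hYZ : Y ⊆ Z := fun x hx => (memZ x).2 ⟨0, Nat.zero_le _, hx⟩
    have : μ Z = 0 := by rw [measure_congr h, measure_empty]
    exact hY0.ne' (measure_mono_null hYZ this)
  · rw [measure_congr h, hInf] at hZfin
    exact lt_irrefl _ hZfin

lemma exists_small_subset_s3 {X : Type*} [MeasurableSpace X] {μ : Measure X} {T : X → X}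
    (hT : CEMPT T μ) (hInf : μ Set.univ = ∞) {Y : Set X} (hY : MeasurableSet Y)
    (hY0 : 0 < μ Y) (hY1 : μ Y < ∞) {ε : ℝ≥0∞} (hε : 0 < ε) :
    ∃ F ⊆ Y, MeasurableSet F ∧ 0 < μ F ∧ μ F < ε := by
  have hTm : Measurable T := hT.2.measurable
  set s : ℕ → Set X := fun n => Y ∩ {x | ∀ j, 0 < j → j ≤ n → T^[j] x ∉ Y} with hs
  have hsm : ∀ n, MeasurableSet (s n) := by
    intro n
    have h : s n = Y ∩ ⋂ j : ℕ, ⋂ _ : 0 < j, ⋂ _ : j ≤ n, (T^[j] ⁻¹' Y)ᶜ := by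
      ext x
      simp [hs]
    rw [h]
    exact hY.inter <| .iInter fun j => .iInter fun _ => .iInter fun _ => ((hTm.iterate j) hY).compl
  have hanti : Antitone s := fun m n hmn x hx =>
    ⟨hx.1, fun j h1 h2 => hx.2 j h1 (h2.trans hmn)⟩
  have hlim := tendsto_measure_iInter_atTop (μ := μ) (fun i => (hsm i).nullMeasurableSet) hanti
    ⟨0, ((measure_mono inter_subset_left).trans_lt hY1).ne⟩
  have hzero : μ (⋂ n, s n) = 0 := by
    refine measure_eq_zero_iff_ae_notMem.2 ?_
    filter_upwards [hT.1.ae_mem_imp_frequently_image_mem hY.nullMeasurableSet] with x hx hxs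
    rw [mem_iInter] at hxs
    obtain ⟨n, hn, hnY⟩ := frequently_atTop.1 (hx (hxs 0).1) 1
    exact (hxs n).2 n hn le_rfl hnY
  rw [hzero] at hlim
  obtain ⟨n, hn⟩ := (hlim.eventually (gt_mem_nhds hε)).exists
  exact ⟨s n, inter_subset_left, hsm n, long_return_pos hT hInf hY hY0 hY1 n, hn⟩

/-- Points that enter `F` for the first time at time exactly `n ≥ 0`. -/
def firstHit {X : Type*} (T : X → X) (F : Set X) (n : ℕ) : Set X :=
  {x | T^[n] x ∈ F ∧ ∀ i < n, T^[i] x ∉ F}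

lemma firstHit_unique {X : Type*} {T : X → X} {F : Set X} {m n : ℕ} {x : X}
    (hm : x ∈ firstHit T F m) (hn : x ∈ firstHit T F n) : m = n := by
  rcases lt_trichotomy m n with h | h | h
  · exact absurd hm.1 (hn.2 m h)
  · exact h
  · exact absurd hn.1 (hm.2 n h)

lemma firstHit_iterate {X : Type*} {T : X → X} {F : Set X} {n j : ℕ} {x : X}
    (hx : x ∈ firstHit T F n) (hj : j ≤ n) : T^[j] x ∈ firstHit T F (n - j) := by
  refine ⟨?_, fun i hi => ?_⟩
  · rw [← Function.iterate_add_apply, Nat.sub_add_cancel hj]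
    exact hx.1
  · rw [← Function.iterate_add_apply]
    exact hx.2 _ (by omega)

/-- Greedy `N`-separated selection of points of `B`, proceeding backwards in time from the
entrance to `F`: a point of `B` entering `F` after exactly `n` steps is selected if `n ≥ N` and
none of its next `N` iterates has been selected. The points with `n < N` are discarded because
the selection does not control the orbit beyond its entrance to `F`. -/
def greedy {X : Type*} (T : X → X) (B F : Set X) (N n : ℕ) : Set X :=
  {x | x ∈ B ∧ x ∈ firstHit T F n ∧ N ≤ n ∧
    ∀ m, (_ : m < n) → n - m ≤ N → T^[n - m] x ∉ greedy T B F N m}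
termination_by n

lemma mem_greedy {X : Type*} {T : X → X} {B F : Set X} {N n : ℕ} {x : X} :
    x ∈ greedy T B F N n ↔ x ∈ B ∧ x ∈ firstHit T F n ∧ N ≤ n ∧
      ∀ m < n, n - m ≤ N → T^[n - m] x ∉ greedy T B F N m := by
  rw [greedy]
  rfl

lemma measurableSet_greedy {X : Type*} [MeasurableSpace X] {T : X → X} (hT : Measurable T)
    {B F : Set X} (hB : MeasurableSet B) (hF : MeasurableSet F) (N n : ℕ) :
    MeasurableSet (greedy T B F N n) := by
  induction n using Nat.strong_induction_on with
  | _ n ih =>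
    have h : greedy T B F N n = B ∩ ((T^[n] ⁻¹' F ∩ ⋂ i : ℕ, ⋂ _ : i < n, (T^[i] ⁻¹' F)ᶜ) ∩
        ({_x | N ≤ n} ∩ ⋂ m : ℕ, ⋂ _ : m < n, ⋂ _ : n - m ≤ N,
          (T^[n - m] ⁻¹' greedy T B F N m)ᶜ)) := by
      ext x
      rw [mem_greedy]
      simp [firstHit]
    rw [h]
    refine hB.inter (((hT.iterate n hF).inter ?_).inter ((MeasurableSet.const _).inter ?_))
    · exact .iInter fun i => .iInter fun _ => (hT.iterate i hF).compl
    · exact .iInter fun m => .iInter fun hm => .iInter fun _ =>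
        (hT.iterate (n - m) (ih m hm)).compl

/-- The return time to the selected set exceeds `N` at each of its points. -/
lemma greedy_separated {X : Type*} {T : X → X} {B F : Set X} {N : ℕ} {x : X}
    (hx : x ∈ ⋃ n, greedy T B F N n) {j : ℕ} (hj0 : 0 < j) (hj : j ≤ N) :
    T^[j] x ∉ ⋃ n, greedy T B F N n := by
  intro hxj
  obtain ⟨n, hn⟩ := mem_iUnion.1 hx
  obtain ⟨m, hm⟩ := mem_iUnion.1 hxj
  obtain ⟨_, hxn, hNn, hsep⟩ := mem_greedy.1 hn
  have hmn : m = n - j :=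
    firstHit_unique (mem_greedy.1 hm).2.1 (firstHit_iterate hxn (hj.trans hNn))
  have hj' : n - m = j := by omega
  exact hsep m (by omega) (by omega) (by rwa [hj'])

/-- Maximality of the greedy selection: a visit to `B` before time `N` is followed, before time
`2N`, by a visit to the selected set or, when `F` is too close, to `F`. -/
lemma coverage {X : Type*} {T : X → X} {B F : Set X} {N : ℕ} {x : X} (hN : 0 < N)
    (hx : ∃ᶠ n in atTop, T^[n] x ∈ F) (hxB : ∃ i < N, T^[i] x ∈ B) :
    (∃ l < 2 * N, T^[l] x ∈ ⋃ n, greedy T B F N n) ∨ ∃ l < 2 * N, T^[l] x ∈ F := by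
  classical
  obtain ⟨i, hi, hiB⟩ := hxB
  have hex : ∃ n, T^[n] (T^[i] x) ∈ F := by
    obtain ⟨n, hn, hnF⟩ := frequently_atTop.1 hx i
    exact ⟨n - i, by rwa [← Function.iterate_add_apply, Nat.sub_add_cancel hn]⟩
  obtain ⟨n, hn⟩ : ∃ n, T^[i] x ∈ firstHit T F n :=
    ⟨Nat.find hex, Nat.find_spec hex, fun _ h => Nat.find_min hex h⟩
  by_cases hNn : N ≤ n
  · left
    by_cases hsel : T^[i] x ∈ greedy T B F N n
    · exact ⟨i, by omega, mem_iUnion.2 ⟨n, hsel⟩⟩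
    · rw [mem_greedy] at hsel
      push Not at hsel
      obtain ⟨m, _, hmN, hm⟩ := hsel hiB hn hNn
      refine ⟨n - m + i, by omega, mem_iUnion.2 ⟨m, ?_⟩⟩
      rwa [Function.iterate_add_apply]
  · right
    refine ⟨n + i, by omega, ?_⟩
    rw [Function.iterate_add_apply]
    exact hn.1

lemma measure_biUnion_preimage_le {X : Type*} [MeasurableSpace X] {μ : Measure X} {T : X → X}
    (hT : MeasurePreserving T μ μ) {A : Set X} (hA : MeasurableSet A) (M : ℕ) :
    μ (⋃ l ∈ Finset.range M, T^[l] ⁻¹' A) ≤ M * μ A := by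
  refine (measure_biUnion_finset_le _ _).trans_eq ?_
  simp [(hT.iterate _).measure_preimage hA.nullMeasurableSet]

/-- Given `k`, some small subset `E` of `Y` satisfies `μ(E) φ_E > k` everywhere on `E`. -/
lemma exists_slow_set {X : Type*} [MeasurableSpace X] {μ : Measure X} {T : X → X}
    (hT : CEMPT T μ) (hInf : μ Set.univ = ∞) {Y : Set X} (hY : MeasurableSet Y)
    (hY0 : 0 < μ Y) (hY1 : μ Y < ∞) (k : ℕ) {ε : ℝ≥0∞} (hε : 0 < ε) :
    ∃ E ⊆ Y, MeasurableSet E ∧ 0 < μ E ∧ μ E < ε ∧ ∀ x ∈ E, (k : ℝ≥0∞) < μ E * phiRT T E x := by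
  have hTm : Measurable T := hT.2.measurable
  have hTp : MeasurePreserving T μ μ := hT.2.toMeasurePreserving
  obtain ⟨B, hBY, hB, hB0, hBε⟩ := exists_small_subset_s3 hT hInf hY hY0 hY1 hε
  have hB1 : μ B < ∞ := (measure_mono hBY).trans_lt hY1
  set Z : ℕ → Set X := fun N => ⋃ i ∈ Finset.range N, T^[i] ⁻¹' B with hZ
  have memZ : ∀ N x, x ∈ Z N ↔ ∃ i < N, T^[i] x ∈ B := by
    intro N x
    simp [hZ]
  have hZmono : Monotone Z := by
    intro M N hMN x hx
    rw [memZ] at hx ⊢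
    obtain ⟨i, hi, h⟩ := hx
    exact ⟨i, hi.trans_le hMN, h⟩
  have hZinf : μ (⋃ N, Z N) = ∞ := by
    have h : (⋃ N, Z N) =ᵐ[μ] univ := by
      rw [eventuallyEq_univ]
      filter_upwards [ae_frequently_mem hT hB hB0] with x hx
      obtain ⟨n, hn⟩ := hx.exists
      exact mem_iUnion.2 ⟨n + 1, (memZ _ _).2 ⟨n, Nat.lt_succ_self n, hn⟩⟩
    rw [measure_congr h, hInf]
  have hlim := tendsto_measure_iUnion_atTop (μ := μ) hZmono
  rw [hZinf] at hlim
  have hlarge : (2 * k + 1 : ℝ≥0∞) < ∞ := by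
    exact_mod_cast ENNReal.natCast_lt_top (2 * k + 1)
  obtain ⟨N, hNZ, hN⟩ := ((hlim.eventually (lt_mem_nhds hlarge)).and (eventually_gt_atTop 0)).exists
  have hNZ' : (2 * k + 1 : ℝ≥0∞) < μ (Z N) := hNZ
  obtain ⟨F, -, hF, hF0, hFε⟩ := exists_small_subset_s3 hT hInf hB hB0 hB1
    (ε := ((2 * N : ℕ) : ℝ≥0∞)⁻¹) (ENNReal.inv_pos.2 (ENNReal.natCast_ne_top _))
  set E : Set X := ⋃ n, greedy T B F N n with hE
  have hEB : E ⊆ B := iUnion_subset fun n x hx => (mem_greedy.1 hx).1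
  have hEm : MeasurableSet E := .iUnion fun n => measurableSet_greedy hTm hB hF N n
  have hcov : ∀ᵐ x ∂μ, x ∈ Z N → x ∈ (⋃ l ∈ Finset.range (2 * N), T^[l] ⁻¹' E) ∪
      ⋃ l ∈ Finset.range (2 * N), T^[l] ⁻¹' F := by
    filter_upwards [ae_frequently_mem hT hF hF0] with x hx hxZ
    have h := coverage hN hx ((memZ N x).1 hxZ)
    simpa [hE] using h
  have hFle : ((2 * N : ℕ) : ℝ≥0∞) * μ F ≤ 1 := by
    calc ((2 * N : ℕ) : ℝ≥0∞) * μ F ≤ ((2 * N : ℕ) : ℝ≥0∞) * ((2 * N : ℕ) : ℝ≥0∞)⁻¹ := by gcongr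
      _ ≤ 1 := ENNReal.mul_inv_le_one _
  have hle : μ (Z N) ≤ 2 * (N * μ E) + 1 := by
    calc μ (Z N) ≤ _ := measure_mono_ae hcov
      _ ≤ _ := measure_union_le _ _
      _ ≤ ((2 * N : ℕ) : ℝ≥0∞) * μ E + ((2 * N : ℕ) : ℝ≥0∞) * μ F :=
        add_le_add (measure_biUnion_preimage_le hTp hEm _) (measure_biUnion_preimage_le hTp hF _)
      _ ≤ 2 * (N * μ E) + 1 := by
        refine add_le_add (le_of_eq ?_) hFle
        push_cast
        ring
  have hkey : (k : ℝ≥0∞) < N * μ E := by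
    have h2 : (2 * k + 1 : ℝ≥0∞) < 2 * (N * μ E) + 1 := hNZ'.trans_le hle
    by_contra hcon
    exact absurd h2 (not_lt.2 (by gcongr; exact not_lt.1 hcon))
  refine ⟨E, hEB.trans hBY, hEm, ?_, (measure_mono hEB).trans_lt hBε, fun x hx => ?_⟩
  · rw [pos_iff_ne_zero]
    intro h
    simp [h] at hkey
  · refine hkey.trans_le ?_
    rw [mul_comm]
    gcongr
    refine le_iInf₂ fun n hn => ?_
    by_contra hcon
    have hnN : n < N := by exact_mod_cast not_le.1 hcon
    exact greedy_separated hx hn.1 hnN.le hn.2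

lemma condProb_eq_one {X : Type*} [MeasurableSpace X] {μ : Measure X} {E A : Set X}
    (h0 : 0 < μ E) (h1 : μ E < ∞) (h : E ⊆ A) : condProb μ E A = 1 := by
  rw [condProb, inter_eq_left.2 h, ENNReal.div_self h0.ne' h1.ne, ENNReal.toReal_one]

/-- Even locally, the normalization `μ(E)` does not give a tight family:
there are `E_k ⊆ Y` with `0 < μ(E_k) < 1/k` and `μ_{E_k}(μ(E_k)·φ_{E_k} > k) > (k−1)/k`;
in particular the family of laws of `μ(E)·φ_E` over subsets of `Y` is not tight. -/
theorem stmt3 {X : Type*} [MeasurableSpace X] (μ : Measure X) [SigmaFinite μ]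
    (T : X → X) (hT : CEMPT T μ) (hInf : μ Set.univ = ∞)
    (Y : Set X) (hY : MeasurableSet Y) (hY0 : 0 < μ Y) (hY1 : μ Y < ∞) :
    (∃ E : ℕ → Set X, ∀ k : ℕ, 1 ≤ k → E k ⊆ Y ∧ MeasurableSet (E k) ∧
        0 < μ (E k) ∧ μ (E k) < ENNReal.ofReal (1 / k) ∧
        ((k : ℝ) - 1) / k <
          condProb μ (E k) {x | (k : ℝ≥0∞) < μ (E k) * phiRT T (E k) x}) ∧
    ¬ ∀ ε : ℝ, 0 < ε → ∃ t : ℝ, ∀ E : Set X, E ⊆ Y → MeasurableSet E → 0 < μ E →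
        condProb μ E {x | ENNReal.ofReal t < μ E * phiRT T E x} ≤ ε := by
  have hslow : ∀ k : ℕ, ∃ E ⊆ Y, MeasurableSet E ∧ 0 < μ E ∧
      (1 ≤ k → μ E < ENNReal.ofReal (1 / k)) ∧ ∀ x ∈ E, (k : ℝ≥0∞) < μ E * phiRT T E x := by
    intro k
    rcases Nat.eq_zero_or_pos k with rfl | hk
    · obtain ⟨E, h1, h2, h3, -, h5⟩ := exists_slow_set hT hInf hY hY0 hY1 0 one_pos
      exact ⟨E, h1, h2, h3, fun h => absurd h (by norm_num), h5⟩
    · have hε : 0 < ENNReal.ofReal (1 / k) := ENNReal.ofReal_pos.2 (by positivity)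
      obtain ⟨E, h1, h2, h3, h4, h5⟩ := exists_slow_set hT hInf hY hY0 hY1 k hε
      exact ⟨E, h1, h2, h3, fun _ => h4, h5⟩
  choose E hEY hEm hE0 hEk hEφ using hslow
  have hE1 : ∀ k, μ (E k) < ∞ := fun k => (measure_mono (hEY k)).trans_lt hY1
  refine ⟨⟨E, fun k hk => ⟨hEY k, hEm k, hE0 k, hEk k hk, ?_⟩⟩, fun htight => ?_⟩
  · have hsub : E k ⊆ {x | (k : ℝ≥0∞) < μ (E k) * phiRT T (E k) x} := hEφ k
    rw [condProb_eq_one (hE0 k) (hE1 k) hsub]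
    have hk' : (0 : ℝ) < k := by exact_mod_cast hk
    rw [div_lt_one hk']
    linarith
  · obtain ⟨t, ht⟩ := htight (1 / 2) (by norm_num)
    obtain ⟨k, hk⟩ := exists_nat_ge t
    have htk : ENNReal.ofReal t ≤ k := by
      rw [← ENNReal.ofReal_natCast]
      exact ENNReal.ofReal_le_ofReal hk
    have h := ht (E k) (hEY k) (hEm k) (hE0 k)
    have hsub : E k ⊆ {x | ENNReal.ofReal t < μ (E k) * phiRT T (E k) x} :=
      fun x hx => htk.trans_lt (hEφ k x hx)
    rw [condProb_eq_one (hE0 k) (hE1 k) hsub] at h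
    norm_num at h
end
end

section
/- Let T be a c.e.m.p.t. on a σ-finite measure space (X,𝒜,μ) with μ(X)=∞. Assume Y∈𝒜 is a Darling–Kac set with return sequence a_n=a_T(n), where a_T∈R_α for some α∈(0,1]. Let b_T be the inverse of a_T and γ_T(s):=1/b_T(1/s) for s>0, γ_T(0):=0. Then (i) γ_T is regularly varying of index 1/α at 0, i.e. γ_T(cs)/γ_T(s)→c^{1/α} as s→0+ for every c>0, and (ii) the family {law_{μ_E}[γ_T(μ(E))·φ_E] : E∈Y∩𝒜, μ(E)>0} is tight: for every ε>0 there is t>0 with μ_E(γ_T(μ(E))·φ_E > t)≤ε for all measurable E⊆Y with μ(E)>0. -/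
/-!
Tightness rests on a last-visit decomposition. For measurable `E ⊆ Y` let `E_m` be the set of
points of `E` which do not return to `E` during the times `1, …, m`. The sets `T^{-k} E_m`,
`0 ≤ k ≤ m`, are pairwise disjoint, so `∑_{k ≤ m} μ(Y ∩ T^{-k} E_m) ≤ μ(Y)`. By duality the left
side is `∫_{E_m} ∑_{k ≤ m} T̂^k 1_Y dμ`, and since `E_m ⊆ Y` the Darling–Kac property bounds it
below by `μ(Y) a(m+1) μ(E_m) / 2` for large `m`. Hence `μ(E_m) ≤ 2 / a(m+1)`
(`measure_noReturn_le`). With `s = b(1/μ(E))`, so that `μ(E) = 1/a(s)` and `γ_T(μ(E)) = 1/s`,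
this gives `μ_E(γ_T(μ(E)) φ_E > t) ≤ 2 a(s) / a(t s)`. As `μ(E) ≤ μ(Y)`, the parameter `s` is
bounded away from `0`, and regular variation together with monotonicity and unboundedness of `a`
makes this ratio small uniformly in `s` (`exists_scale`).

Regular variation of `γ_T` at `0` is regular variation of index `1/α` of the inverse `b` at
infinity (`regVary_inv`), which follows by comparing `a(l b(v)) ≈ l^α v` with `a(b(c v)) = c v`.
-/

open MeasureTheory Filter Set Topology ENNReal

noncomputable section

/-! ### Scaling functions and their inverses -/

lemma scaling_inv_nonneg {a b : ℝ → ℝ} (ha : IsScalingFunction a)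
    (hb : ∀ x : ℝ, 0 ≤ x → b (a x) = x) {y : ℝ} (hy : 0 ≤ y) : 0 ≤ b y := by
  obtain ⟨x, hx, rfl⟩ := ha.2.2.2.2 y hy
  rwa [hb x hx]

lemma scaling_lt_iff {a b : ℝ → ℝ} (ha : IsScalingFunction a)
    (hb : ∀ x : ℝ, 0 ≤ x → b (a x) = x) (hb' : ∀ y : ℝ, 0 ≤ y → a (b y) = y)
    {x y : ℝ} (hx : 0 ≤ x) (hy : 0 ≤ y) : a x < y ↔ x < b y := by
  have h := ha.2.1.lt_iff_lt (a := x) (b := b y) hx (scaling_inv_nonneg ha hb hy)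
  rwa [hb' y hy] at h

lemma lt_scaling_iff {a b : ℝ → ℝ} (ha : IsScalingFunction a)
    (hb : ∀ x : ℝ, 0 ≤ x → b (a x) = x) (hb' : ∀ y : ℝ, 0 ≤ y → a (b y) = y)
    {x y : ℝ} (hx : 0 ≤ x) (hy : 0 ≤ y) : y < a x ↔ b y < x := by
  have h := ha.2.1.lt_iff_lt (a := b y) (b := x) (scaling_inv_nonneg ha hb hy) hx
  rwa [hb' y hy] at h

lemma scaling_inv_pos {a b : ℝ → ℝ} (ha : IsScalingFunction a)
    (hb : ∀ x : ℝ, 0 ≤ x → b (a x) = x) (hb' : ∀ y : ℝ, 0 ≤ y → a (b y) = y)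
    {y : ℝ} (hy : 0 < y) : 0 < b y := by
  rw [← scaling_lt_iff ha hb hb' le_rfl hy.le, ha.1]
  exact hy

lemma scaling_pos {a : ℝ → ℝ} (ha : IsScalingFunction a) {x : ℝ} (hx : 0 < x) : 0 < a x := by
  have h := ha.2.1 (Set.mem_Ici.2 le_rfl) (Set.mem_Ici.2 hx.le) hx
  rwa [ha.1] at h

lemma scaling_inv_tendsto {a b : ℝ → ℝ} (ha : IsScalingFunction a)
    (hb : ∀ x : ℝ, 0 ≤ x → b (a x) = x) (hb' : ∀ y : ℝ, 0 ≤ y → a (b y) = y) :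
    Tendsto b atTop atTop := by
  rw [tendsto_atTop]
  intro K
  filter_upwards [eventually_gt_atTop (a (max K 0)), eventually_ge_atTop 0] with v hv hv0
  exact (le_max_left K 0).trans
    ((scaling_lt_iff ha hb hb' (le_max_right K 0) hv0).1 hv).le

/-- The inverse of a scaling function in `R_α` is in `R_{1/α}`. -/
lemma regVary_inv {a b : ℝ → ℝ} (ha : IsScalingFunction a) {α : ℝ} (hα : 0 < α)
    (hreg : RegVary a α)
    (hb : ∀ x : ℝ, 0 ≤ x → b (a x) = x) (hb' : ∀ y : ℝ, 0 ≤ y → a (b y) = y) :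
    RegVary b (1 / α) := by
  intro c hc
  have hpow : (c ^ (1 / α)) ^ α = c := by
    rw [← Real.rpow_mul hc.le, one_div_mul_cancel hα.ne', Real.rpow_one]
  have hL : 0 < c ^ (1 / α) := Real.rpow_pos_of_pos hc _
  have hbt := scaling_inv_tendsto ha hb hb'
  rw [tendsto_order]
  constructor
  · intro l hl
    rcases le_or_gt l 0 with hl0 | hl0
    · filter_upwards [eventually_gt_atTop 0] with v hv
      exact hl0.trans_lt (div_pos (scaling_inv_pos ha hb hb' (by positivity))
        (scaling_inv_pos ha hb hb' hv))
    · have hlc : l ^ α < c := by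
        calc l ^ α < (c ^ (1 / α)) ^ α := Real.rpow_lt_rpow hl0.le hl hα
          _ = c := hpow
      have h := ((hreg l hl0).comp hbt).eventually_lt_const hlc
      filter_upwards [h, eventually_gt_atTop 0] with v hv hv0
      have hbv := scaling_inv_pos ha hb hb' hv0
      simp only [Function.comp_apply] at hv
      rw [hb' v hv0.le, div_lt_iff₀ hv0] at hv
      rw [lt_div_iff₀ hbv]
      exact (scaling_lt_iff ha hb hb' (by positivity) (by positivity)).1 hv
  · intro l hl
    have hl0 := hL.trans hl
    have hlc : c < l ^ α := by
      calc c = (c ^ (1 / α)) ^ α := hpow.symm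
        _ < l ^ α := Real.rpow_lt_rpow hL.le hl hα
    have h := ((hreg l hl0).comp hbt).eventually_const_lt hlc
    filter_upwards [h, eventually_gt_atTop 0] with v hv hv0
    have hbv := scaling_inv_pos ha hb hb' hv0
    simp only [Function.comp_apply] at hv
    rw [hb' v hv0.le, lt_div_iff₀ hv0] at hv
    rw [div_lt_iff₀ hbv]
    exact (lt_scaling_iff ha hb hb' (by positivity) (by positivity)).1 hv

/-- For a regularly varying scaling function of positive index, stretching the argument by a
large enough factor `t` multiplies the value by at least `K`, uniformly over arguments bounded
away from `0`. -/
lemma exists_scale {a : ℝ → ℝ} (ha : IsScalingFunction a) {α : ℝ} (hα : 0 < α)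
    (hreg : RegVary a α) {β K : ℝ} (hβ : 0 < β) (hK : 0 < K) (R : ℝ) :
    ∃ t : ℝ, 0 < t ∧ R ≤ t ∧ ∀ s, β ≤ s → K * a s ≤ a (t * s) := by
  have hmono : ∀ ⦃x y : ℝ⦄, 0 ≤ x → x ≤ y → a x ≤ a y := fun x y hx hxy =>
    ha.2.1.monotoneOn (Set.mem_Ici.2 hx) (Set.mem_Ici.2 (hx.trans hxy)) hxy
  -- the limiting ratio for the factor `(K + 1)^(1/α)` is `K + 1 > K`
  set t₀ : ℝ := (K + 1) ^ (1 / α) with ht₀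
  have ht₀pos : 0 < t₀ := Real.rpow_pos_of_pos (by linarith) _
  have hpow : t₀ ^ α = K + 1 := by
    rw [ht₀, ← Real.rpow_mul (by linarith), one_div_mul_cancel hα.ne', Real.rpow_one]
  have hev := (hreg t₀ ht₀pos).eventually_const_lt (u := K) (by rw [hpow]; linarith)
  obtain ⟨S, hS⟩ := eventually_atTop.1 hev
  -- arguments in the compact range `[β, S]` are handled by unboundedness of `a`
  have haS : 0 ≤ a (max S 0) := ha.2.2.2.1 _ (le_max_right _ _)
  obtain ⟨x₁, hx₁, hax₁⟩ := ha.2.2.2.2 (K * a (max S 0)) (by positivity)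
  refine ⟨max t₀ (max R (x₁ / β)), lt_max_of_lt_left ht₀pos,
    (le_max_left _ _).trans (le_max_right _ _), fun s hs => ?_⟩
  set t := max t₀ (max R (x₁ / β))
  have hs0 : 0 < s := hβ.trans_le hs
  rcases le_total S s with h | h
  · have h1 := hS s h
    rw [lt_div_iff₀ (scaling_pos ha hs0)] at h1
    exact h1.le.trans (hmono (by positivity)
      (mul_le_mul_of_nonneg_right (le_max_left _ _) hs0.le))
  · have h1 : x₁ ≤ t * s := by
      calc x₁ = x₁ / β * β := by field_simp
        _ ≤ t * s := mul_le_mul ((le_max_right _ _).trans (le_max_right _ _)) hs hβ.le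
            (ht₀pos.le.trans (le_max_left _ _))
    calc K * a s ≤ K * a (max S 0) :=
          mul_le_mul_of_nonneg_left (hmono hs0.le (h.trans (le_max_left _ _))) hK.le
      _ = a x₁ := hax₁.symm
      _ ≤ a (t * s) := hmono hx₁ h1

/-! ### The last-visit decomposition -/

/-- Points of `E` that do not return to `E` during the times `1, …, m`. -/
def noReturn {X : Type*} (T : X → X) (E : Set X) (m : ℕ) : Set X :=
  E ∩ {x | ∀ j : ℕ, 0 < j → j ≤ m → T^[j] x ∉ E}

lemma measurableSet_noReturn {X : Type*} [MeasurableSpace X] {T : X → X} (hT : Measurable T)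
    {E : Set X} (hE : MeasurableSet E) (m : ℕ) : MeasurableSet (noReturn T E m) := by
  have h : {x | ∀ j : ℕ, 0 < j → j ≤ m → T^[j] x ∉ E}
      = ⋂ j : ℕ, ⋂ (_ : 0 < j), ⋂ (_ : j ≤ m), (T^[j] ⁻¹' E)ᶜ := by
    ext x
    simp
  rw [noReturn, h]
  exact hE.inter (MeasurableSet.iInter fun j => MeasurableSet.iInter fun _ =>
    MeasurableSet.iInter fun _ => ((hT.iterate j) hE).compl)

lemma noReturn_disjoint {X : Type*} (T : X → X) (E : Set X) {m i j : ℕ} (hij : i < j)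
    (hj : j < m + 1) :
    Disjoint (T^[i] ⁻¹' noReturn T E m) (T^[j] ⁻¹' noReturn T E m) := by
  rw [Set.disjoint_left]
  intro x hxi hxj
  refine hxi.2 (j - i) (by omega) (by omega) ?_
  rw [← Function.iterate_add_apply, Nat.sub_add_cancel hij.le]
  exact hxj.1

/-- The disjointness of the preimages of `noReturn T E m` under `T^0, …, T^m`, integrated. -/
lemma sum_map_noReturn_le {X : Type*} [MeasurableSpace X] (μ : Measure X) {T : X → X}
    (hT : Measurable T) {E : Set X} (hE : MeasurableSet E) (Y : Set X) (m : ℕ) :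
    ∑ k ∈ Finset.range (m + 1), (Measure.map (T^[k]) (μ.restrict Y)) (noReturn T E m) ≤ μ Y := by
  have hm := measurableSet_noReturn hT hE m
  calc _ = ∑ k ∈ Finset.range (m + 1), (μ.restrict Y) (T^[k] ⁻¹' noReturn T E m) :=
        Finset.sum_congr rfl fun k _ => Measure.map_apply (hT.iterate k) hm
    _ = (μ.restrict Y) (⋃ k ∈ Finset.range (m + 1), T^[k] ⁻¹' noReturn T E m) := by
        rw [measure_biUnion_finset _ fun k _ => (hT.iterate k) hm]
        intro i hi j hj hij
        simp only [Finset.coe_range, Set.mem_Iio] at hi hj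
        rcases lt_or_gt_of_ne hij with h | h
        · exact noReturn_disjoint T E h hj
        · exact (noReturn_disjoint T E h hi).symm
    _ ≤ (μ.restrict Y) Set.univ := measure_mono (Set.subset_univ _)
    _ = μ Y := by simp

/-- The key estimate: `μ(E ∩ {φ_E > m}) ≤ 2 / a(m+1)` for all large `m`, uniformly in
`E ⊆ Y`. -/
lemma measure_noReturn_le {X : Type*} [MeasurableSpace X] {μ : Measure X} {T : X → X}
    (hT : Measurable T) {a : ℝ → ℝ} (ha : IsScalingFunction a) {Y : Set X}
    (hDK : IsDKSet T μ Y a) :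
    ∃ N : ℕ, ∀ m : ℕ, N ≤ m + 1 → ∀ E : Set X, E ⊆ Y → MeasurableSet E →
      (μ (noReturn T E m)).toReal ≤ 2 / a ((m + 1 : ℕ) : ℝ) := by
  obtain ⟨-, hY0, hYf, h⟩ := hDK
  obtain ⟨N, hN⟩ := h (1 / 2) (by norm_num)
  refine ⟨N, fun m hm E hEY hE => ?_⟩
  have hYr : 0 < (μ Y).toReal := ENNReal.toReal_pos hY0.ne' hYf.ne
  have han : 0 < a ((m + 1 : ℕ) : ℝ) := scaling_pos ha (by positivity)
  have hsub : noReturn T E m ⊆ Y := Set.inter_subset_left.trans hEY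
  have hmeas := measurableSet_noReturn hT hE m
  set c : ℝ := a ((m + 1 : ℕ) : ℝ) * (μ Y).toReal / 2 with hc
  have hae : ∀ᵐ x ∂μ.restrict (noReturn T E m),
      ENNReal.ofReal c ≤ ∑ k ∈ Finset.range (m + 1), dkDens T μ Y k x := by
    filter_upwards [ae_restrict_of_ae_restrict_of_subset hsub (hN (m + 1) hm)] with x hx
    have h1 := (abs_le.1 hx).1
    have h2 : (1 / 2 : ℝ) ≤ (∑ k ∈ Finset.range (m + 1), (dkDens T μ Y k x).toReal)
        / (μ Y).toReal / a ((m + 1 : ℕ) : ℝ) := by linarith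
    rw [le_div_iff₀ han, le_div_iff₀ hYr] at h2
    calc ENNReal.ofReal c
        ≤ ENNReal.ofReal (∑ k ∈ Finset.range (m + 1), (dkDens T μ Y k x).toReal) :=
          ENNReal.ofReal_le_ofReal (by rw [hc]; linarith)
      _ = ∑ k ∈ Finset.range (m + 1), ENNReal.ofReal (dkDens T μ Y k x).toReal :=
          ENNReal.ofReal_sum_of_nonneg fun _ _ => ENNReal.toReal_nonneg
      _ ≤ _ := Finset.sum_le_sum fun _ _ => ENNReal.ofReal_toReal_le
  have hmain : ENNReal.ofReal c * μ (noReturn T E m) ≤ μ Y := by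
    calc ENNReal.ofReal c * μ (noReturn T E m)
        = ∫⁻ _ in noReturn T E m, ENNReal.ofReal c ∂μ := by rw [setLIntegral_const]
      _ ≤ ∫⁻ x in noReturn T E m, ∑ k ∈ Finset.range (m + 1), dkDens T μ Y k x ∂μ :=
          lintegral_mono_ae hae
      _ = ∑ k ∈ Finset.range (m + 1), ∫⁻ x in noReturn T E m, dkDens T μ Y k x ∂μ :=
          lintegral_finsetSum _ fun k _ => Measure.measurable_rnDeriv _ _
      _ ≤ ∑ k ∈ Finset.range (m + 1),
            (Measure.map (T^[k]) (μ.restrict Y)) (noReturn T E m) :=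
          Finset.sum_le_sum fun k _ => Measure.setLIntegral_rnDeriv_le _
      _ ≤ μ Y := sum_map_noReturn_le μ hT hE Y m
  have hr := ENNReal.toReal_mono hYf.ne hmain
  rw [ENNReal.toReal_mul, ENNReal.toReal_ofReal (by positivity)] at hr
  rw [le_div_iff₀ han]
  have : (μ Y).toReal * ((μ (noReturn T E m)).toReal * a ((m + 1 : ℕ) : ℝ))
      ≤ (μ Y).toReal * 2 := by
    rw [hc] at hr
    linarith
  exact le_of_mul_le_mul_left this hYr

/-- With `s = 1/γ`, the event `γ · φ_E > t` forces no return to `E` up to time `⌊t s⌋`. -/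
lemma inter_phiRT_subset {X : Type*} (T : X → X) (E : Set X) {t s : ℝ} (ht : 0 ≤ t)
    (hs : 0 < s) :
    E ∩ {x | ENNReal.ofReal t < ENNReal.ofReal (1 / s) * phiRT T E x}
      ⊆ noReturn T E ⌊t * s⌋₊ := by
  rintro x ⟨hxE, hx⟩
  refine ⟨hxE, fun j hj0 hjm hjE => ?_⟩
  have hphi : phiRT T E x ≤ (j : ℝ≥0∞) := iInf₂_le (α := ℝ≥0∞) j ⟨hj0, hjE⟩
  have hjs : (j : ℝ) ≤ t * s := (Nat.le_floor_iff (by positivity)).1 hjm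
  have h : ENNReal.ofReal (1 / s) * phiRT T E x ≤ ENNReal.ofReal t := by
    calc ENNReal.ofReal (1 / s) * phiRT T E x
        ≤ ENNReal.ofReal (1 / s) * (j : ℝ≥0∞) := by gcongr
      _ = ENNReal.ofReal (1 / s * j) := by
          rw [ENNReal.ofReal_mul (by positivity), ENNReal.ofReal_natCast]
      _ ≤ ENNReal.ofReal t := by
          refine ENNReal.ofReal_le_ofReal ?_
          rw [one_div_mul_eq_div, div_le_iff₀ hs]
          exact hjs
  exact absurd hx (not_lt.2 h)

/-- If `Y` is a Darling–Kac set with `a_T ∈ R_α`, `α ∈ (0,1]`, then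
`γ_T(s) = 1/b_T(1/s)` is regularly varying of index `1/α` at `0+`, and the family of laws
of `γ_T(μ(E))·φ_E` over subsets `E ⊆ Y` of positive measure is tight. -/
theorem stmt5 {X : Type*} [MeasurableSpace X] (μ : Measure X) [SigmaFinite μ]
    (T : X → X) (hT : CEMPT T μ) (hInf : μ Set.univ = ∞)
    (a b γT : ℝ → ℝ) (ha : IsScalingFunction a)
    (Y : Set X) (hDK : IsDKSet T μ Y a)
    (α : ℝ) (hα : α ∈ Set.Ioc (0 : ℝ) 1) (hreg : RegVary a α)
    (hb : ∀ x : ℝ, 0 ≤ x → b (a x) = x) (hb' : ∀ y : ℝ, 0 ≤ y → a (b y) = y)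
    (hγ0 : γT 0 = 0) (hγ : ∀ s : ℝ, 0 < s → γT s = 1 / b (1 / s)) :
    (∀ c : ℝ, 0 < c →
      Tendsto (fun s => γT (c * s) / γT s) (𝓝[>] (0 : ℝ)) (𝓝 (c ^ (1 / α)))) ∧
    ∀ ε : ℝ, 0 < ε → ∃ t : ℝ, 0 < t ∧
      ∀ E : Set X, E ⊆ Y → MeasurableSet E → 0 < μ E →
        condProb μ E {x | ENNReal.ofReal t <
          ENNReal.ofReal (γT (μ E).toReal) * phiRT T E x} ≤ ε := by
  constructor
  · intro c hc
    have hlim : Tendsto (fun s : ℝ => (c * s)⁻¹) (𝓝[>] 0) atTop := by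
      have h1 : Tendsto (fun s : ℝ => c⁻¹ * s⁻¹) (𝓝[>] 0) atTop :=
        tendsto_inv_nhdsGT_zero.const_mul_atTop (inv_pos.2 hc)
      refine h1.congr fun s => ?_
      rw [mul_inv]
    refine ((regVary_inv ha hα.1 hreg hb hb' c hc).comp hlim).congr' ?_
    filter_upwards [self_mem_nhdsWithin] with s hs
    have hs0 : 0 < s := hs
    have e : c * (c * s)⁻¹ = 1 / s := by field_simp
    simp only [Function.comp_apply]
    rw [hγ s hs0, hγ (c * s) (by positivity), e, ← one_div (c * s), div_div_div_eq]
    simp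
  · intro ε hε
    have hTm : Measurable T := hT.2.toMeasurePreserving.measurable
    obtain ⟨N, hN⟩ := measure_noReturn_le hTm ha hDK
    obtain ⟨-, hY0, hYf, -⟩ := hDK
    have hYr : 0 < (μ Y).toReal := ENNReal.toReal_pos hY0.ne' hYf.ne
    have hβ : 0 < b (1 / (μ Y).toReal) := scaling_inv_pos ha hb hb' (by positivity)
    set β := b (1 / (μ Y).toReal) with hβdef
    obtain ⟨t, ht0, htN, ht⟩ := exists_scale ha hα.1 hreg hβ (K := 2 / ε) (by positivity) (N / β)
    refine ⟨t, ht0, fun E hEY hE hE0 => ?_⟩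
    have hEf : μ E < ∞ := (measure_mono hEY).trans_lt hYf
    have hEr : 0 < (μ E).toReal := ENNReal.toReal_pos hE0.ne' hEf.ne
    have hEle : (μ E).toReal ≤ (μ Y).toReal := ENNReal.toReal_mono hYf.ne (measure_mono hEY)
    have hs0 : 0 < b (1 / (μ E).toReal) := scaling_inv_pos ha hb hb' (by positivity)
    have has : a (b (1 / (μ E).toReal)) = 1 / (μ E).toReal := hb' _ (by positivity)
    have hβs : β ≤ b (1 / (μ E).toReal) := by
      by_contra! hlt
      rw [hβdef, ← scaling_lt_iff ha hb hb' hs0.le (by positivity), has] at hlt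
      exact absurd hlt (not_lt.2 (one_div_le_one_div_of_le hEr hEle))
    rw [hγ _ hEr, condProb]
    set s := b (1 / (μ E).toReal)
    have hfl : t * s < ((⌊t * s⌋₊ + 1 : ℕ) : ℝ) := by
      push_cast
      exact Nat.lt_floor_add_one _
    have hNle : N ≤ ⌊t * s⌋₊ + 1 := by
      have h1 : (N : ℝ) ≤ t * s := by
        calc (N : ℝ) = N / β * β := by field_simp
          _ ≤ t * s := mul_le_mul htN hβs hβ.le ht0.le
      exact_mod_cast (h1.trans hfl.le)
    have hbound := hN _ hNle E hEY hE
    have hats : 2 / ε * (1 / (μ E).toReal) ≤ a ((⌊t * s⌋₊ + 1 : ℕ) : ℝ) := by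
      rw [← has]
      exact (ht s hβs).trans (ha.2.1.monotoneOn (Set.mem_Ici.2 (by positivity))
        (Set.mem_Ici.2 (by positivity)) hfl.le)
    have hsub := measure_mono (μ := μ) (inter_phiRT_subset T E ht0.le hs0)
    have hfin : μ (noReturn T E ⌊t * s⌋₊) ≠ ∞ :=
      ((measure_mono Set.inter_subset_left).trans_lt hEf).ne
    rw [ENNReal.toReal_div, div_le_iff₀ hEr]
    calc _ ≤ (μ (noReturn T E ⌊t * s⌋₊)).toReal := ENNReal.toReal_mono hfin hsub
      _ ≤ 2 / a ((⌊t * s⌋₊ + 1 : ℕ) : ℝ) := hbound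
      _ ≤ 2 / (2 / ε * (1 / (μ E).toReal)) :=
          div_le_div_of_nonneg_left (by norm_num) (by positivity) hats
      _ = ε * (μ E).toReal := by field_simp
end
end

section
/- Let α∈(0,1] and let F̃∈ℱ. Define F(t):=∫_0^t [1−F̃(s)]·α·(t−s)^{α−1} ds for t≥0. If F(t)≤1 for all t≥0, then F is continuous on [0,∞) with F(0)=0, and F̃(s)→1 as s→∞ (so F̃ is a probability distribution function on [0,∞)). -/
/-!
With `H x = F̃ (max x 0)`, a monotone function on `ℝ` that is continuous at `0`, the substitution
`s = t v` turns the defining integral into `F t = t ^ α * J t`, where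
`J t = ∫₀¹ (1 - H (t v)) α (1 - v) ^ (α - 1) dv`. The kernel `α (1 - v) ^ (α - 1)` has total mass
`1`. Since `H` has only countably many discontinuities, dominated convergence makes `J` continuous,
so `F` is continuous with `F 0 = 0`. Monotonicity gives `J t ≥ 1 - F̃ t`, hence
`t ^ α * (1 - F̃ t) ≤ F t ≤ 1`, that is `1 - t ^ (-α) ≤ F̃ t ≤ 1`, and `F̃ t → 1`.
-/

open MeasureTheory Filter Set Topology ENNReal

noncomputable section

lemma kernel_integrable {α : ℝ} (h0 : 0 < α) :
    IntervalIntegrable (fun v : ℝ => α * (1 - v) ^ (α - 1)) volume 0 1 := by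
  have h := (intervalIntegral.intervalIntegrable_rpow' (a := 0) (b := 1)
    (r := α - 1) (by linarith)).comp_sub_left 1
  simp only [sub_zero, sub_self] at h
  exact (h.symm).const_mul α

lemma kernel_integral {α : ℝ} (h0 : 0 < α) :
    ∫ v in (0 : ℝ)..1, α * (1 - v) ^ (α - 1) = 1 := by
  rw [intervalIntegral.integral_const_mul,
    intervalIntegral.integral_comp_sub_left (fun x : ℝ => x ^ (α - 1)) 1,
    sub_self, sub_zero, integral_rpow (Or.inl (by linarith))]
  simp only [sub_add_cancel, Real.one_rpow, Real.zero_rpow h0.ne', sub_zero]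
  field_simp

lemma kernel_nonneg {α : ℝ} (h0 : 0 < α) {v : ℝ} (hv : v ≤ 1) :
    0 ≤ α * (1 - v) ^ (α - 1) :=
  mul_nonneg h0.le (Real.rpow_nonneg (by linarith) _)

/-- The substitution `s = t v`. -/
lemma integral_rescale {α : ℝ} (h0 : 0 < α) (G : ℝ → ℝ) {t : ℝ} (ht : 0 ≤ t) :
    ∫ s in (0 : ℝ)..t, (1 - G s) * (α * (t - s) ^ (α - 1))
      = t ^ α * ∫ v in (0 : ℝ)..1, (1 - G (max (t * v) 0)) * (α * (1 - v) ^ (α - 1)) := by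
  rcases ht.eq_or_lt with rfl | ht
  · simp [Real.zero_rpow h0.ne']
  have h := intervalIntegral.smul_integral_comp_mul_left (a := 0) (b := 1)
    (fun s => (1 - G s) * (α * (t - s) ^ (α - 1))) t
  rw [mul_zero, mul_one] at h
  rw [← h, smul_eq_mul, ← intervalIntegral.integral_const_mul,
    ← intervalIntegral.integral_const_mul]
  refine intervalIntegral.integral_congr fun v hv => ?_
  rw [uIcc_of_le zero_le_one] at hv
  have h1 : t - t * v = t * (1 - v) := by ring
  have h2 : t ^ α = t * t ^ (α - 1) := by
    rw [← Real.rpow_one_add' ht.le (by linarith)]; congr 1; ring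
  rw [max_eq_left (mul_nonneg ht.le hv.1), h1,
    Real.mul_rpow ht.le (by linarith [hv.2]), h2]
  ring

/-- Dominated convergence: a monotone `H` is discontinuous only on a countable set, whose preimage
under `v ↦ t v` is null when `t ≠ 0`; at `t = 0` the continuity of `H` at `0` is needed. -/
lemma continuous_rescaled {α : ℝ} (h0 : 0 < α) {H : ℝ → ℝ} (hm : Monotone H)
    (hb : ∀ x, H x ∈ Icc (0 : ℝ) 1) (hc : ContinuousAt H 0) :
    Continuous fun t : ℝ => ∫ v in (0 : ℝ)..1, (1 - H (t * v)) * (α * (1 - v) ^ (α - 1)) := by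
  rw [continuous_iff_continuousAt]
  intro t
  refine intervalIntegral.continuousAt_of_dominated_interval
    (bound := fun v => α * (1 - v) ^ (α - 1)) ?_ ?_ (kernel_integrable h0) ?_
  · refine Eventually.of_forall fun x => Measurable.aestronglyMeasurable ?_
    have := hm.measurable
    fun_prop
  · refine Eventually.of_forall fun x => Eventually.of_forall fun v hv => ?_
    rw [uIoc_of_le zero_le_one] at hv
    have hk := kernel_nonneg h0 hv.2
    have := hb (x * v)
    rw [Real.norm_of_nonneg (mul_nonneg (by linarith [this.2]) hk)]
    exact mul_le_of_le_one_left hk (by linarith [this.1])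
  · have hcont : ∀ᵐ v : ℝ, ContinuousAt H (t * v) := by
      by_cases ht : t = 0
      · subst ht; simpa using hc
      · have : ({v : ℝ | ¬ ContinuousAt H (t * v)}).Countable :=
          hm.countable_not_continuousAt.preimage (mul_right_injective₀ ht)
        exact this.measure_zero volume
    filter_upwards [hcont] with v hv _
    have h1 : ContinuousAt (fun x => H (x * v)) t :=
      ContinuousAt.comp (f := fun x => x * v) hv (by fun_prop)
    exact (continuousAt_const.sub h1).mul continuousAt_const

/-- `J t ≥ 1 - H t`, because `H (t v) ≤ H t` for `v ≤ 1` and the kernel has mass one. -/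
lemma le_rescaled {α : ℝ} (h0 : 0 < α) {H : ℝ → ℝ} (hm : Monotone H)
    (hb : ∀ x, H x ∈ Icc (0 : ℝ) 1) {t : ℝ} (ht : 0 ≤ t) :
    1 - H t ≤ ∫ v in (0 : ℝ)..1, (1 - H (t * v)) * (α * (1 - v) ^ (α - 1)) := by
  have hk := kernel_integrable h0
  calc 1 - H t = ∫ v in (0 : ℝ)..1, (1 - H t) * (α * (1 - v) ^ (α - 1)) := by
        rw [intervalIntegral.integral_const_mul, kernel_integral h0, mul_one]
    _ ≤ _ := by
        refine intervalIntegral.integral_mono_on zero_le_one (hk.const_mul _) ?_ ?_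
        · refine hk.mono_fun' (Measurable.aestronglyMeasurable ?_) ?_
          · have := hm.measurable
            fun_prop
          · refine (ae_restrict_mem measurableSet_uIoc).mono fun v hv => ?_
            rw [uIoc_of_le zero_le_one] at hv
            have hk := kernel_nonneg h0 hv.2
            have := hb (t * v)
            simp only
            rw [Real.norm_of_nonneg (mul_nonneg (by linarith [this.2]) hk)]
            exact mul_le_of_le_one_left hk (by linarith [this.1])
        · intro v hv
          have := hm (mul_le_of_le_one_right ht hv.2)
          exact mul_le_mul_of_nonneg_right (by linarith) (kernel_nonneg h0 hv.2)

/-- If `F̃ ∈ ℱ` and `F(t) = ∫_0^t (1−F̃(s))·α·(t−s)^{α−1} ds ≤ 1` for all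
`t ≥ 0`, then `F` is continuous on `[0,∞)` with `F(0)=0`, and `F̃(s) → 1` as `s → ∞`. -/
theorem stmt10 (α : ℝ) (hα : α ∈ Set.Ioc (0 : ℝ) 1)
    (Ftil : ℝ → ℝ) (hFtil : MemF Ftil) (F : ℝ → ℝ)
    (hFdef : ∀ t : ℝ, 0 ≤ t →
      F t = ∫ s in (0 : ℝ)..t, (1 - Ftil s) * (α * (t - s) ^ (α - 1)))
    (hF1 : ∀ t : ℝ, 0 ≤ t → F t ≤ 1) :
    ContinuousOn F (Set.Ici 0) ∧ F 0 = 0 ∧ Tendsto Ftil atTop (𝓝 1) := by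
  obtain ⟨hmono, hbd, hrc⟩ := hFtil
  have h0 : 0 < α := hα.1
  set H : ℝ → ℝ := fun x => Ftil (max x 0) with hH
  have hm : Monotone H := fun x y hxy => hmono (le_max_right _ _) (max_le_max_right 0 hxy)
  have hb : ∀ x, H x ∈ Icc (0 : ℝ) 1 := fun x => hbd _ (le_max_right _ _)
  have hc : ContinuousAt H 0 := by
    have h1 : Tendsto (fun x : ℝ => max x 0) (𝓝 0) (𝓝[Ici 0] 0) := by
      refine tendsto_nhdsWithin_iff.2 ⟨?_, Eventually.of_forall fun x => le_max_right x 0⟩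
      have : Continuous fun x : ℝ => max x 0 := by fun_prop
      simpa using this.tendsto 0
    have h2 := (hrc 0 le_rfl).tendsto.comp h1
    simpa [ContinuousAt, hH, Function.comp_def] using h2
  have hFJ : ∀ t, 0 ≤ t → F t
      = t ^ α * ∫ v in (0 : ℝ)..1, (1 - H (t * v)) * (α * (1 - v) ^ (α - 1)) := fun t ht => by
    rw [hFdef t ht, integral_rescale h0 Ftil ht]
  refine ⟨?_, ?_, ?_⟩
  · have h1 := (Real.continuous_rpow_const h0.le).mul (continuous_rescaled h0 hm hb hc)
    exact h1.continuousOn.congr fun t ht => hFJ t ht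
  · simp [hFdef 0 le_rfl]
  · have hlim : Tendsto (fun t : ℝ => 1 - t ^ (-α)) atTop (𝓝 1) := by
      simpa using (tendsto_rpow_neg_atTop h0).const_sub 1
    refine tendsto_of_tendsto_of_tendsto_of_le_of_le' hlim tendsto_const_nhds ?_ ?_
    · filter_upwards [eventually_gt_atTop 0] with t ht
      have h1 := le_rescaled h0 hm hb ht.le
      have hHt : H t = Ftil t := by simp [hH, ht.le]
      have hp : 0 < t ^ α := Real.rpow_pos_of_pos ht α
      have h2 : t ^ α * (1 - Ftil t) ≤ 1 := by
        rw [← hHt]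
        exact (mul_le_mul_of_nonneg_left h1 hp.le).trans ((hFJ t ht.le).symm.le.trans (hF1 t ht.le))
      have h3 : 1 - Ftil t ≤ t ^ (-α) := by
        rw [Real.rpow_neg ht.le, ← one_div, le_div_iff₀ hp]
        linarith
      linarith
    · filter_upwards [eventually_ge_atTop 0] with t ht using (hbd t ht).2
end
end

section
/- Let T be a c.e.m.p.t. on a σ-finite measure space (X,𝒜,μ) with μ(X)=∞. Assume Y∈𝒜 is a Darling–Kac set with return sequence a_n=a_T(n), where a_T∈R_α for some α∈(0,1]; let b_T be the inverse of a_T and γ_T(s):=1/b_T(1/s). Suppose E_k⊆Y (k≥1) are measurable sets of positive measure with μ(E_k)→0, and suppose μ_{E_k}(γ_T(μ(E_k))·φ_{E_k} ≤ t) → 1 as k→∞ for every t>0. Then μ_Y(γ_T(μ(E_k))·φ_{E_k} ≤ t) → 0 as k→∞ for every t≥0 (i.e. the hitting-time laws converge to the point mass at ∞). -/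
/-!
Write `A = E k`, `s = μ A`, and `L = b (1/s) = 1/γ_T(s)`, so that `a L = 1/s` and `L → ∞`.

*Occupation bound.* Uniform convergence in the Darling–Kac property gives, for measurable `B ⊆ Y`
and large `n`, `∑_{j<n} μ(Y ∩ T⁻ʲ B) ≤ 2 μ(Y) a(n) μ(B)` (`occupation_bound`). By regular variation,
for `n = ⌊(t+1)L⌋ + 1` the factor `a(n)` is at most `K / s` with `K` independent of `k`.

*Dichotomy.* Fix `M` and let `D` be the set of points of `A` that do not return to `A` within time
`L/M`. A point hitting `A` before time `tL` either visits `D` before time `n`, or each of its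
successive visits to `A` is followed by another one within time `L/M`, so that it visits `A` at
least `M` times before time `n` (`many_visits`). Together with the Markov inequality, the
occupation bound applied to `B = D` and `B = A` yields
`μ_Y(φ_A ≤ tL) ≤ 2K (μ(D)/μ(A) + 1/M)`.
By hypothesis `μ(D)/μ(A) → 0` for fixed `M`, and `M` is arbitrary.
-/

open MeasureTheory Filter Set Topology ENNReal

noncomputable section

/-! ### Entrance times and numbers of visits -/

/-- Points entering `A` at some time `n` with `1 ≤ n ≤ R`, i.e. `{φ_A ≤ R}`. -/
def hitBy {X : Type*} (T : X → X) (A : Set X) (R : ℝ) : Set X :=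
  {x | ∃ n : ℕ, 0 < n ∧ (n : ℝ) ≤ R ∧ T^[n] x ∈ A}

lemma measurableSet_hitBy {X : Type*} [MeasurableSpace X] {T : X → X} (hT : Measurable T)
    {A : Set X} (hA : MeasurableSet A) (R : ℝ) : MeasurableSet (hitBy T A R) := by
  have : hitBy T A R = ⋃ n : ℕ, ⋃ _ : 0 < n ∧ (n : ℝ) ≤ R, T^[n] ⁻¹' A := by
    ext x
    simp [hitBy, and_assoc]
  rw [this]
  exact MeasurableSet.iUnion fun n => MeasurableSet.iUnion fun _ => (hT.iterate n) hA

/-- The infimum defining `phiRT` is attained when finite, so the sublevel sets of the normalized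
entrance time are the sets `hitBy`. -/
lemma setOf_phiRT_le {X : Type*} (T : X → X) (A : Set X) {L t : ℝ} (hL : 0 < L) (ht : 0 ≤ t) :
    {x | ENNReal.ofReal (1 / L) * phiRT T A x ≤ ENNReal.ofReal t} = hitBy T A (t * L) := by
  have hg : 0 < ENNReal.ofReal (1 / L) := ENNReal.ofReal_pos.2 (by positivity)
  have key : ∀ n : ℕ, ENNReal.ofReal (1 / L) * (n : ℝ≥0∞) ≤ ENNReal.ofReal t ↔
      (n : ℝ) ≤ t * L := by
    intro n
    rw [← ENNReal.ofReal_natCast, ← ENNReal.ofReal_mul (by positivity),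
      ENNReal.ofReal_le_ofReal_iff ht, one_div, inv_mul_le_iff₀ hL, mul_comm]
  ext x
  simp only [Set.mem_ofPred_eq, hitBy]
  constructor
  · intro h
    by_cases hne : {n : ℕ | 0 < n ∧ T^[n] x ∈ A}.Nonempty
    · have hmem := Nat.sInf_mem hne
      refine ⟨sInf {n : ℕ | 0 < n ∧ T^[n] x ∈ A}, hmem.1, ?_, hmem.2⟩
      rw [← key]
      refine le_trans ?_ h
      gcongr
      unfold phiRT
      refine le_iInf₂ fun n hn => ?_
      exact_mod_cast Nat.sInf_le hn
    · exfalso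
      rw [Set.not_nonempty_iff_eq_empty] at hne
      have : phiRT T A x = ∞ := by
        unfold phiRT
        rw [hne]
        simp
      rw [this, ENNReal.mul_top hg.ne'] at h
      exact absurd h (by simp)
  · rintro ⟨n, hn, hnR, hnA⟩
    refine le_trans ?_ ((key n).2 hnR)
    gcongr
    exact iInf₂_le n (show n ∈ {n : ℕ | 0 < n ∧ T^[n] x ∈ A} from ⟨hn, hnA⟩)

/-- An orbit that enters `A` before time `t * L` and whose visits to `A` before time `n`
are always followed by a return within time `L / M` visits `A` at least `M` times before time `n`,
provided `n > (t + 1) * L`. -/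
lemma many_visits {X : Type*} (T : X → X) (A : Set X) {L t : ℝ} (hL : 0 < L) {M n : ℕ}
    (hM : 0 < M) (hn : (t + 1) * L < n) {x : X} (hx : x ∈ hitBy T A (t * L))
    (hD : ∀ j < n, T^[j] x ∉ A \ hitBy T A (1 / M * L)) :
    (M : ℝ≥0∞) ≤ ∑ j ∈ Finset.range n, (T^[j] ⁻¹' A).indicator (fun _ => (1 : ℝ≥0∞)) x := by
  classical
  have hM' : (0 : ℝ) < M := by exact_mod_cast hM
  have step : ∀ m : ℕ, m ≤ M → ∃ j : ℕ, (j : ℝ) ≤ t * L + m * (1 / M * L) ∧ T^[j] x ∈ A ∧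
      m + 1 ≤ ((Finset.range (j + 1)).filter fun i => T^[i] x ∈ A).card := by
    intro m
    induction m with
    | zero =>
      intro _
      obtain ⟨j, _, hj, hjA⟩ := hx
      refine ⟨j, by simpa using hj, hjA, ?_⟩
      exact Finset.card_pos.2 ⟨j, by simp [hjA]⟩
    | succ m ih =>
      intro hm
      obtain ⟨j, hj, hjA, hc⟩ := ih (by omega)
      have hmM : (m : ℝ) * (1 / M * L) ≤ 1 * L := by
        rw [← mul_assoc]
        gcongr
        rw [mul_one_div, div_le_one hM']
        exact_mod_cast (by omega : m ≤ M)
      have hjn : j < n := by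
        have : (j : ℝ) < n := by linarith
        exact_mod_cast this
      have hr : T^[j] x ∈ hitBy T A (1 / M * L) := by
        by_contra hcon
        exact hD j hjn ⟨hjA, hcon⟩
      obtain ⟨i, hi, hiR, hiA⟩ := hr
      rw [← Function.iterate_add_apply] at hiA
      refine ⟨i + j, ?_, hiA, ?_⟩
      · push_cast
        linarith
      · have hsub : insert (i + j) ((Finset.range (j + 1)).filter fun i => T^[i] x ∈ A) ⊆
            (Finset.range (i + j + 1)).filter fun i => T^[i] x ∈ A := by
          intro l hl
          simp only [Finset.mem_insert, Finset.mem_filter, Finset.mem_range] at hl ⊢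
          rcases hl with rfl | ⟨h1, h2⟩
          · exact ⟨by omega, hiA⟩
          · exact ⟨by omega, h2⟩
        have hnot : i + j ∉ (Finset.range (j + 1)).filter fun i => T^[i] x ∈ A := by
          simp only [Finset.mem_filter, Finset.mem_range]
          omega
        have := Finset.card_le_card hsub
        rw [Finset.card_insert_of_notMem hnot] at this
        omega
  obtain ⟨j, hj, _, hc⟩ := step M le_rfl
  have hjn : j < n := by
    have h1 : (M : ℝ) * (1 / M * L) = L := by field_simp
    have : (j : ℝ) < n := by linarith
    exact_mod_cast this
  have hsum : ∑ j ∈ Finset.range n, (T^[j] ⁻¹' A).indicator (fun _ => (1 : ℝ≥0∞)) x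
      = (((Finset.range n).filter fun i => T^[i] x ∈ A).card : ℝ≥0∞) := by
    simp [Set.indicator_apply, Finset.sum_boole]
  rw [hsum]
  have hsub : ((Finset.range (j + 1)).filter fun i => T^[i] x ∈ A) ⊆
      (Finset.range n).filter fun i => T^[i] x ∈ A :=
    Finset.filter_subset_filter _ (Finset.range_mono (by omega))
  have := Finset.card_le_card hsub
  exact_mod_cast (by omega : M ≤ _)

/-! ### Measure estimates -/

/-- The total occupation of `B ⊆ Y` up to time `n`, started from `μ` on `Y`, is the integral over
`B` of the Darling–Kac sums, hence at most about `μ(Y) a(n) μ(B)`. -/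
lemma occupation_bound {X : Type*} [MeasurableSpace X] (μ : Measure X) [SigmaFinite μ]
    {T : X → X} (hT : MeasurePreserving T μ μ) {a : ℝ → ℝ} (hpos : ∀ x, 0 < x → 0 < a x)
    {Y : Set X} (hDK : IsDKSet T μ Y a) :
    ∃ N : ℕ, ∀ n ≥ N, ∀ B ⊆ Y, MeasurableSet B →
      ∑ j ∈ Finset.range n, μ (Y ∩ T^[j] ⁻¹' B) ≤
        ENNReal.ofReal (2 * (μ Y).toReal * a n) * μ B := by
  obtain ⟨hY, hY0, hYfin, hU⟩ := hDK
  obtain ⟨N, hN⟩ := hU 1 one_pos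
  have hfin : IsFiniteMeasure (μ.restrict Y) := ⟨by simpa using hYfin⟩
  refine ⟨max N 1, fun n hn B hBY hB => ?_⟩
  have hy : 0 < (μ Y).toReal := ENNReal.toReal_pos hY0.ne' hYfin.ne
  have han : 0 < a n := hpos _ (by exact_mod_cast (le_trans (le_max_right _ _) hn))
  have hj : ∀ j, μ (Y ∩ T^[j] ⁻¹' B) = ∫⁻ x in B, dkDens T μ Y j x ∂μ := by
    intro j
    have hTj := hT.iterate j
    have hac : Measure.map (T^[j]) (μ.restrict Y) ≪ μ := by
      have : Measure.map (T^[j]) (μ.restrict Y) ≤ μ := by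
        calc _ ≤ Measure.map (T^[j]) μ := Measure.map_mono Measure.restrict_le_self hTj.measurable
          _ = μ := hTj.map_eq
      exact this.absolutelyContinuous
    unfold dkDens
    rw [Measure.setLIntegral_rnDeriv hac, Measure.map_apply hTj.measurable hB,
      Measure.restrict_apply (hTj.measurable hB), inter_comm]
  simp_rw [hj]
  rw [← lintegral_finsetSum _
    (fun j _ => show Measurable (dkDens T μ Y j) from Measure.measurable_rnDeriv _ _)]
  calc _ ≤ ∫⁻ x in B, ENNReal.ofReal (2 * (μ Y).toReal * a n) ∂μ := by
        apply lintegral_mono_ae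
        have h1 := ae_restrict_of_ae_restrict_of_subset hBY (hN n (le_trans (le_max_left _ _) hn))
        have h2 : ∀ᵐ x ∂μ.restrict B, ∀ j, dkDens T μ Y j x < ∞ := by
          apply ae_restrict_of_ae
          rw [ae_all_iff]
          intro j
          exact Measure.rnDeriv_lt_top _ _
        filter_upwards [h1, h2] with x hx hx2
        rw [← ENNReal.ofReal_toReal (ENNReal.sum_lt_top.2 (fun j _ => hx2 j)).ne,
          ENNReal.toReal_sum (fun j _ => (hx2 j).ne)]
        apply ENNReal.ofReal_le_ofReal
        have h3 := (abs_le.1 hx).2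
        have h4 : (∑ k ∈ Finset.range n, (dkDens T μ Y k x).toReal) / (μ Y).toReal / a n ≤ 2 := by
          linarith
        rw [div_le_iff₀ han, div_le_iff₀ hy] at h4
        linarith
    _ = _ := by rw [lintegral_const, Measure.restrict_apply_univ]

/-- The dichotomy "visit the slowly returning part `D` of `A`, or visit `A` at least `M` times",
combined with the Markov inequality for the number of visits. -/
lemma hit_le {X : Type*} [MeasurableSpace X] (μ : Measure X)
    {T : X → X} (hT : Measurable T) {A Y : Set X} (hY : MeasurableSet Y) (hA : MeasurableSet A)
    {L t : ℝ} (hL : 0 < L) {M n : ℕ} (hM : 0 < M) (hn : (t + 1) * L < n) :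
    M * μ (Y ∩ hitBy T A (t * L)) ≤
      M * (∑ j ∈ Finset.range n, μ (Y ∩ T^[j] ⁻¹' (A \ hitBy T A (1 / M * L)))) +
        ∑ j ∈ Finset.range n, μ (Y ∩ T^[j] ⁻¹' A) := by
  set D := A \ hitBy T A (1 / M * L) with hDdef
  set f : X → ℝ≥0∞ := fun x =>
    ∑ j ∈ Finset.range n, (T^[j] ⁻¹' A).indicator (fun _ => (1 : ℝ≥0∞)) x with hf
  have hind : ∀ j, Measurable ((T^[j] ⁻¹' A).indicator (fun _ => (1 : ℝ≥0∞))) := fun j =>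
    measurable_const.indicator (hT.iterate j hA)
  have hfm : Measurable f := Finset.measurable_sum _ (fun j _ => hind j)
  have hsub : Y ∩ hitBy T A (t * L) ⊆
      (⋃ j ∈ Finset.range n, Y ∩ T^[j] ⁻¹' D) ∪ ({x | (M : ℝ≥0∞) ≤ f x} ∩ Y) := by
    rintro x ⟨hxY, hx⟩
    by_cases h : ∃ j < n, T^[j] x ∈ D
    · left
      obtain ⟨j, hj, hjD⟩ := h
      simp only [mem_iUnion, Finset.mem_range]
      exact ⟨j, hj, hxY, hjD⟩
    · right
      push Not at h
      exact ⟨many_visits T A hL hM hn hx h, hxY⟩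
  have hmarkov : M * μ ({x | (M : ℝ≥0∞) ≤ f x} ∩ Y) ≤
      ∑ j ∈ Finset.range n, μ (Y ∩ T^[j] ⁻¹' A) := by
    have h := mul_meas_ge_le_lintegral (μ := μ.restrict Y) hfm (M : ℝ≥0∞)
    rw [Measure.restrict_apply' hY] at h
    refine h.trans_eq ?_
    rw [hf, lintegral_finsetSum _ (fun j _ => hind j)]
    refine Finset.sum_congr rfl fun j _ => ?_
    rw [lintegral_indicator (hT.iterate j hA), setLIntegral_one,
      Measure.restrict_apply' hY, inter_comm]
  calc _ ≤ (M : ℝ≥0∞) * (μ (⋃ j ∈ Finset.range n, Y ∩ T^[j] ⁻¹' D) +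
        μ ({x | (M : ℝ≥0∞) ≤ f x} ∩ Y)) := by
        gcongr
        exact (measure_mono hsub).trans (measure_union_le _ _)
    _ ≤ _ := by
        rw [mul_add]
        gcongr
        exact measure_biUnion_finset_le _ _

/-! ### Hitting-time limit -/

/-- If the normalized return distributions of `E_k` converge to the point
mass at 0 (i.e. `μ_{E_k}(γ_T(μ(E_k))·φ_{E_k} ≤ t) → 1` for all `t > 0`), then the
normalized hitting distributions converge to the point mass at ∞. -/
theorem stmt11 {X : Type*} [MeasurableSpace X] (μ : Measure X) [SigmaFinite μ]
    (T : X → X) (hT : CEMPT T μ) (hInf : μ Set.univ = ∞)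
    (a b γT : ℝ → ℝ) (ha : IsScalingFunction a)
    (Y : Set X) (hDK : IsDKSet T μ Y a)
    (α : ℝ) (hα : α ∈ Set.Ioc (0 : ℝ) 1) (hreg : RegVary a α)
    (hb : ∀ x : ℝ, 0 ≤ x → b (a x) = x) (hb' : ∀ y : ℝ, 0 ≤ y → a (b y) = y)
    (hγ : ∀ s : ℝ, 0 < s → γT s = 1 / b (1 / s))
    (E : ℕ → Set X) (hE : ∀ k, E k ⊆ Y ∧ MeasurableSet (E k) ∧ 0 < μ (E k))
    (hE0 : Tendsto (fun k => μ (E k)) atTop (𝓝 0))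
    (hret : ∀ t : ℝ, 0 < t →
      Tendsto (fun k => nrmDF μ T γT (E k) (E k) t) atTop (𝓝 1)) :
    ∀ t : ℝ, 0 ≤ t →
      Tendsto (fun k => nrmDF μ T γT Y (E k) t) atTop (𝓝 0) := by
  intro t ht
  obtain ⟨ha0, hamono, -, -, hasurj⟩ := ha
  have hpos : ∀ x, 0 < x → 0 < a x := fun x hx => by
    have := hamono (show (0 : ℝ) ∈ Set.Ici 0 by simp) (show x ∈ Set.Ici 0 from hx.le) hx
    rwa [ha0] at this
  have hmp : MeasurePreserving T μ μ := hT.2.toMeasurePreserving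
  obtain ⟨N, hN⟩ := occupation_bound μ hmp hpos hDK
  obtain ⟨hY, hY0, hYfin, -⟩ := hDK
  have hy : 0 < (μ Y).toReal := ENNReal.toReal_pos hY0.ne' hYfin.ne
  have hEfin : ∀ k, μ (E k) ≠ ∞ := fun k => (measure_mono (hE k).1 |>.trans_lt hYfin).ne
  have hspos : ∀ k, 0 < (μ (E k)).toReal := fun k =>
    ENNReal.toReal_pos (hE k).2.2.ne' (hEfin k)
  have hs0 : Tendsto (fun k => (μ (E k)).toReal) atTop (𝓝 0) := by
    have := (ENNReal.tendsto_toReal (by simp : (0 : ℝ≥0∞) ≠ ∞)).comp hE0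
    simpa [Function.comp_def] using this
  have hb0 : ∀ y, 0 ≤ y → 0 ≤ b y := fun y hy => by
    obtain ⟨x, hx, rfl⟩ := hasurj y hy
    rwa [hb x hx]
  set L : ℕ → ℝ := fun k => b (1 / (μ (E k)).toReal) with hLdef
  have haL : ∀ k, a (L k) = 1 / (μ (E k)).toReal := fun k =>
    hb' _ (one_div_pos.2 (hspos k)).le
  have hL0 : ∀ k, 0 < L k := fun k => by
    refine lt_of_le_of_ne (hb0 _ (one_div_pos.2 (hspos k)).le) fun h => ?_
    have h1 := haL k
    rw [← h, ha0] at h1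
    exact (one_div_pos.2 (hspos k)).ne h1
  have hLtop : Tendsto L atTop atTop := by
    have hinv : Tendsto (fun k => 1 / (μ (E k)).toReal) atTop atTop := by
      simp_rw [one_div]
      exact tendsto_inv_nhdsGT_zero.comp
        (tendsto_nhdsWithin_iff.2 ⟨hs0, Eventually.of_forall hspos⟩)
    rw [tendsto_atTop]
    intro R
    filter_upwards [hinv.eventually_ge_atTop (a (max R 0))] with k hk
    rw [← haL k] at hk
    exact (le_max_left R 0).trans
      ((hamono.le_iff_le (Set.mem_Ici.2 (le_max_right R 0)) (hL0 k).le).1 hk)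
  have hnrm : ∀ (B : Set X) k u, 0 ≤ u → nrmDF μ T γT B (E k) u =
      (μ (B ∩ hitBy T (E k) (u * L k))).toReal / (μ B).toReal := fun B k u hu => by
    unfold nrmDF condProb
    rw [hγ _ (hspos k), setOf_phiRT_le T (E k) (hL0 k) hu, ENNReal.toReal_div]
  set K : ℝ := (t + 2) ^ α + 1 with hK
  have hKpos : 0 < K := by positivity
  have hK1 : ∀ᶠ k in atTop, a ((t + 2) * L k) * (μ (E k)).toReal ≤ K := by
    have h := (hreg (t + 2) (by linarith)).comp hLtop
    filter_upwards [h.eventually (gt_mem_nhds (show (t + 2) ^ α < K by linarith))] with k hk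
    simp only [Function.comp_apply, haL] at hk
    rw [div_div_eq_mul_div, div_one] at hk
    exact hk.le
  rw [Metric.tendsto_nhds]
  intro ε hε
  obtain ⟨M, hMgt⟩ := exists_nat_gt (8 * K / ε)
  have hM' : (0 : ℝ) < M := lt_trans (by positivity) hMgt
  have hM : 0 < M := by exact_mod_cast hM'
  have hη : 0 < ε / (8 * K) := by positivity
  have hr := (hret (1 / M) (by positivity)).eventually
    (lt_mem_nhds (show 1 - ε / (8 * K) < 1 by linarith))
  filter_upwards [hr, hK1, hLtop.eventually_ge_atTop 1, hLtop.eventually_ge_atTop (N : ℝ)]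
    with k hrk hKk hLk hLN
  obtain ⟨hEY, hEm, -⟩ := hE k
  set n : ℕ := ⌊(t + 1) * L k⌋₊ + 1 with hndef
  have hnlt : (t + 1) * L k < n := by
    rw [hndef]
    push_cast
    exact Nat.lt_floor_add_one _
  have hnle : (n : ℝ) ≤ (t + 2) * L k := by
    have := Nat.floor_le (show 0 ≤ (t + 1) * L k from
      mul_nonneg (by linarith) (hL0 k).le)
    rw [hndef]
    push_cast
    linarith
  have hnN : N ≤ n := by
    have : (N : ℝ) ≤ n := by nlinarith [hL0 k]
    exact_mod_cast this
  have hanK : a n * (μ (E k)).toReal ≤ K := by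
    refine le_trans ?_ hKk
    gcongr
    exact (hamono.le_iff_le (Set.mem_Ici.2 (Nat.cast_nonneg n))
      (show (t + 2) * L k ∈ Set.Ici 0 from mul_nonneg (by linarith) (hL0 k).le)).2 hnle
  have han : 0 < a n := hpos _ (by exact_mod_cast Nat.succ_pos _)
  set D := E k \ hitBy T (E k) (1 / M * L k) with hD
  have hHm := measurableSet_hitBy hmp.measurable hEm (1 / M * L k)
  have hDm : MeasurableSet D := hEm.diff hHm
  have hDfin : μ D ≠ ∞ := (measure_mono sdiff_subset |>.trans_lt (hEfin k).lt_top).ne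
  have hDs : (μ D).toReal ≤ ε / (8 * K) * (μ (E k)).toReal := by
    have h1 := measureReal_inter_add_sdiff (μ := μ) (s := E k) hHm (hEfin k)
    rw [hnrm _ _ _ (by positivity), lt_div_iff₀ (hspos k)] at hrk
    simp only [measureReal_def] at h1
    linarith
  have hmain : M * (μ (Y ∩ hitBy T (E k) (t * L k))).toReal ≤
      2 * (μ Y).toReal * a n * (M * (μ D).toReal + (μ (E k)).toReal) := by
    have h1 := hit_le μ hmp.measurable hY hEm (hL0 k) hM hnlt
    have h2 : M * μ (Y ∩ hitBy T (E k) (t * L k)) ≤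
        M * (ENNReal.ofReal (2 * (μ Y).toReal * a n) * μ D) +
          ENNReal.ofReal (2 * (μ Y).toReal * a n) * μ (E k) := by
      refine h1.trans ?_
      gcongr
      · exact hN n hnN D (sdiff_subset.trans hEY) hDm
      · exact hN n hnN (E k) hEY hEm
    have hf1 : M * (ENNReal.ofReal (2 * (μ Y).toReal * a n) * μ D) ≠ ∞ :=
      ENNReal.mul_ne_top (by simp) (ENNReal.mul_ne_top ENNReal.ofReal_ne_top hDfin)
    have hf2 : ENNReal.ofReal (2 * (μ Y).toReal * a n) * μ (E k) ≠ ∞ :=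
      ENNReal.mul_ne_top ENNReal.ofReal_ne_top (hEfin k)
    have h3 := ENNReal.toReal_mono (ENNReal.add_ne_top.2 ⟨hf1, hf2⟩) h2
    rw [ENNReal.toReal_add hf1 hf2] at h3
    simp only [ENNReal.toReal_mul, ENNReal.toReal_natCast,
      ENNReal.toReal_ofReal (by positivity : 0 ≤ 2 * (μ Y).toReal * a n)] at h3
    linarith
  rw [hnrm Y k t ht, Real.dist_eq, sub_zero, abs_of_nonneg (by positivity), div_lt_iff₀ hy]
  have hMK : 8 * K < ε * M := by rwa [div_lt_iff₀' hε] at hMgt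
  have h5 : M * (μ D).toReal + (μ (E k)).toReal ≤
      (M * (ε / (8 * K)) + 1) * (μ (E k)).toReal := by
    nlinarith
  have h6 : M * (μ (Y ∩ hitBy T (E k) (t * L k))).toReal ≤
      2 * (μ Y).toReal * (K * (M * (ε / (8 * K)) + 1)) := by
    calc _ ≤ 2 * (μ Y).toReal * a n * ((M * (ε / (8 * K)) + 1) * (μ (E k)).toReal) :=
          hmain.trans (by gcongr)
      _ = 2 * (μ Y).toReal * ((a n * (μ (E k)).toReal) * (M * (ε / (8 * K)) + 1)) := by ring
      _ ≤ _ := by gcongr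
  have h7 : K * (M * (ε / (8 * K)) + 1) = M * ε / 8 + K := by field_simp
  rw [h7] at h6
  refine lt_of_mul_lt_mul_left (h6.trans_lt ?_) hM'.le
  nlinarith [mul_pos hM' hε]
end
end
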